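/- arXiv:1812.10833 — 2 statements merged into one kernel-verified Lean document; each statement's English description precedes it below -/
import Mathlib

section
/- Let Γ be a countable group and let Γ ↷ (X,μ) be a free ergodic probability measure preserving action that is measure-theoretically predictable with respect to some invariant random partial order on Γ. Then the Rokhlin entropy of Γ ↷ (X,μ) is zero. -/
/-!
The argument splits according to the cardinality of `Γ`.

If `Γ` is finite, every order has a maximal element, so by invariance the past of `1` is empty with
positive probability. Predictability from an empty past makes the measure algebra trivial, and the
one-piece partition generates (`rokhlinEntropy_eq_zero_of_finite`).

If `Γ` is infinite, a generating partition of entropy at most `δ` is found for each `δ > 0`. Countably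
many sets of prescribed rapidly decreasing measures can be encoded in a partition of entropy at
most `δ` (`exists_smallPartition`), so it is enough to find arbitrarily small sets whose translates
generate the Borel `σ`-algebra modulo `μ`.

* Some arbitrarily small sets generate a free factor `m`, that is, their translates separate `x` from
  `g • x` for `g ≠ 1` (`exists_free_factor`). This uses ergodicity and freeness.
* Every Borel set `A` is determined, relative to `m`, by an arbitrarily small set `E`
  (`exists_small_code`).

For the second point, suppose that only the part of `A` inside a set `L ∈ m` is still to be encoded.
Predictability, applied to the partition into `L ∩ A`, `L \ A` and `Lᶜ`, says that `A` on `L` is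
nearly a function of the labels of finitely many translates `f • x`, `f ≠ 1`
(`exists_local_predictor`; only irreflexivity of the order is used). Colour the space finely by sets
of `m`, so that most points have a colour different from those of these translates. One of the
colour classes `K` of `L` has few errors, and for most points of `K` the relevant translates are
outside `K`; so `A` on `K` is recovered from the part of `A` in `L \ K` and a small set of errors
(`exists_step`). Hence `L` may be replaced by `L \ K`. When this is done greedily, the remaining
sets have measure tending to zero: at a limit `M` of positive measure the step would be available
with a fixed gain for all `L` close to `M` (`exists_reach_lt`). In the end the code `E` consists of
the recorded errors and the part of `A` in a tiny remainder.
-/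

open Filter MeasureTheory
open scoped symmDiff ENNReal

/-- A countable partition of `X`: every point lies in exactly one piece. -/
def IsPartition {X ι : Type*} (A : ι → Set X) : Prop :=
  ∀ x : X, ∃! i : ι, x ∈ A i

/-- Finiteness of the Shannon entropy `H_μ(α)`. -/
def HasFiniteShannonEntropy {X ι : Type*} [amb : MeasurableSpace X] (μ : Measure X)
    (A : ι → Set X) : Prop :=
  Summable fun i => Real.negMulLog (μ (A i)).toReal

/-- The σ-algebra `α^Φ` generated by `{g⁻¹ B : g ∈ Φ, B ∈ α}`. -/
def partSigma {Γ X ι : Type*} [Group Γ] [MulAction Γ X] (A : ι → Set X) (Φ : Set Γ) :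
    MeasurableSpace X :=
  MeasurableSpace.generateFrom {s : Set X | ∃ g ∈ Φ, ∃ i : ι, s = (fun x => g • x) ⁻¹' A i}

/-- The set of partial orders on `Γ` inside the space `2^(Γ×Γ)` of binary relations. -/
def ordSet (Γ : Type*) [Group Γ] : Set (Γ × Γ → Bool) :=
  {R | (∀ x y : Γ, R (x, y) = true → R (y, x) = false) ∧
       (∀ x y z : Γ, R (x, y) = true → R (y, z) = true → R (x, z) = true)}

/-- The `Γ`-action on binary relations: `x (g·R) y ↔ (xg) R (yg)`. -/
def relAct {Γ : Type*} [Group Γ] (g : Γ) (R : Γ × Γ → Bool) : Γ × Γ → Bool :=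
  fun p => R (p.1 * g, p.2 * g)

/-- An invariant random (partial) order on `Γ`. -/
def IsInvRandomOrder {Γ : Type*} [Group Γ] (ν : Measure (Γ × Γ → Bool)) : Prop :=
  IsProbabilityMeasure ν ∧ ν (ordSet Γ) = 1 ∧ ∀ g : Γ, Measure.map (relAct g) ν = ν

/-- The Rokhlin entropy of `Γ ↷ (X,μ)`: the infimum of Shannon entropies of countable
generating partitions (partitions with `α^Γ = ℬ(X)` mod `μ`). -/
noncomputable def rokhlinEntropy (Γ : Type*) {X : Type*} [Group Γ] [amb : MeasurableSpace X]
    [MulAction Γ X] (μ : Measure X) : ℝ≥0∞ :=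
  ⨅ (A : ℕ → Set X) (_ : IsPartition A ∧ (∀ n, MeasurableSet (A n)) ∧
      ∀ s : Set X, MeasurableSet s →
        ∃ B : Set X, MeasurableSet[partSigma A (Set.univ : Set Γ)] B ∧ μ (s ∆ B) = 0),
    ∑' n, ENNReal.ofReal (Real.negMulLog (μ (A n)).toReal)

/-! ### Encoding small sets in a partition of small entropy -/

lemma exists_negMulLog_le {w : ℝ} (hw : 0 < w) :
    ∃ u : ℝ, 0 < u ∧ ∀ p : ℝ, 0 ≤ p → p ≤ u → Real.negMulLog p ≤ w := by
  have h := Real.continuous_negMulLog.tendsto 0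
  rw [Real.negMulLog_zero] at h
  have h2 := h.eventually (gt_mem_nhds hw)
  obtain ⟨u, hu, hb⟩ := Metric.eventually_nhds_iff.1 h2
  refine ⟨u / 2, by positivity, fun p hp hpu => (hb ?_).le⟩
  rw [Real.dist_eq, sub_zero, abs_of_nonneg hp]
  linarith

/-- Sets of sufficiently small (prescribed) measure can be encoded in one countable partition of
small entropy: after removal of a null set, every point lies in finitely many `D n`, and the
atoms are indexed by the finite sets `S` of indices `n` with `x ∈ D n`. The atom of
a nonempty `S` has measure at most `u (max S)`, and only finitely many `S` have a given maximum, so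
`u` can be chosen to make each entropy summand as small as required. -/
lemma exists_smallPartition {X : Type*} [MeasurableSpace X] (μ : Measure X)
    [IsProbabilityMeasure μ] {δ : ℝ} (hδ : 0 < δ) :
    ∃ u : ℕ → ℝ, (∀ n, 0 < u n) ∧ ∀ D : ℕ → Set X, (∀ n, MeasurableSet (D n)) →
      (∀ n, μ.real (D n) ≤ u n) →
      ∃ P : ℕ → Set X, IsPartition P ∧ (∀ n, MeasurableSet (P n)) ∧
        (∑' n, ENNReal.ofReal (Real.negMulLog (μ (P n)).toReal) ≤ ENNReal.ofReal δ) ∧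
        ∀ n, ∃ T : Set ℕ, D n =ᵐ[μ] ⋃ k ∈ T, P k := by
  classical
  let e : ℕ ≃ Finset ℕ := (Denumerable.eqv (Finset ℕ)).symm
  let w : ℕ → ℝ := fun k => δ / 2 / 2 / 2 ^ k
  have hw : ∀ k, 0 < w k := fun k => by positivity
  have hwsum : HasSum w (δ / 2) := hasSum_geometric_two' (δ / 2)
  choose v hv hvb using fun k => exists_negMulLog_le (hw k)
  -- `u n` is below the threshold of every `S ⊆ {0, …, n}`, and `∑ u n ≤ δ / 2`
  let u : ℕ → ℝ := fun n => min (w n)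
    (((Finset.range (n + 1)).powerset).inf' (Finset.powerset_nonempty _) (fun S => v (e.symm S)))
  have hu : ∀ n, 0 < u n := fun n => by
    refine lt_min (hw n) ?_
    refine (Finset.lt_inf'_iff _).2 ?_
    exact fun S _ => hv _
  refine ⟨u, hu, fun D hD hDu => ?_⟩
  let N : Set X := limsup D atTop
  have hNm : MeasurableSet N := MeasurableSet.measurableSet_limsup hD
  have hsum : ∑' n, μ (D n) ≤ ENNReal.ofReal (δ / 2) := by
    rw [← hwsum.tsum_eq, ENNReal.ofReal_tsum_of_nonneg (fun n => (hw n).le) hwsum.summable]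
    refine ENNReal.tsum_le_tsum fun n => ?_
    rw [← ENNReal.ofReal_toReal (measure_ne_top μ (D n))]
    exact ENNReal.ofReal_le_ofReal ((hDu n).trans (min_le_left _ _))
  have hN0 : μ N = 0 := measure_limsup_atTop_eq_zero (ne_top_of_le_ne_top ENNReal.ofReal_ne_top hsum)
  let D' : ℕ → Set X := fun n => D n \ N
  have hD' : ∀ n, MeasurableSet (D' n) := fun n => (hD n).diff hNm
  have hfin : ∀ x, {n | x ∈ D' n}.Finite := by
    intro x
    by_cases hx : x ∈ N
    · convert Set.finite_empty
      ext n; simp [D', hx]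
    · have : ¬ ∃ᶠ n in atTop, x ∈ D n := by
        rwa [← Filter.mem_limsup_iff_frequently_mem]
      rw [Nat.frequently_atTop_iff_infinite, Set.not_infinite] at this
      exact this.subset fun n hn => hn.1
  let P : ℕ → Set X := fun k => {x | ∀ n, x ∈ D' n ↔ n ∈ e k}
  have hP : ∀ k, MeasurableSet (P k) := by
    intro k
    have : P k = ⋂ n, {x | x ∈ D' n ↔ n ∈ e k} := by ext x; simp [P]
    rw [this]
    refine MeasurableSet.iInter fun n => ?_
    by_cases h : n ∈ e k
    · simpa [h] using hD' n
    · simp only [h, iff_false]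
      exact (hD' n).compl
  have hmemP : ∀ x k, x ∈ P k ↔ e k = (hfin x).toFinset := by
    intro x k
    simp only [P, Set.mem_ofPred_eq, Finset.ext_iff, Set.Finite.mem_toFinset]
    exact forall_congr' fun n => iff_comm
  refine ⟨P, ?_, hP, ?_, ?_⟩
  · intro x
    refine ⟨e.symm (hfin x).toFinset, by simp [hmemP], fun k hk => ?_⟩
    rw [← (hmemP x k).1 hk, Equiv.symm_apply_apply]
  · have hbound : ∀ k, ENNReal.ofReal (Real.negMulLog (μ (P k)).toReal) ≤
        ENNReal.ofReal (w k) + if k = e.symm ∅ then ENNReal.ofReal (δ / 2) else 0 := by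
      intro k
      by_cases hk : k = e.symm ∅
      · rw [if_pos hk]
        refine le_add_left (ENNReal.ofReal_le_ofReal ?_)
        -- `-p log p ≤ 1 - p`, and the complement of this atom is covered by the sets `D n`
        have h1 : Real.negMulLog (μ (P k)).toReal ≤ 1 - (μ (P k)).toReal := by
          have h0 : 0 ≤ (μ (P k)).toReal := ENNReal.toReal_nonneg
          rcases h0.eq_or_lt with h | h
          · rw [← h]; simp
          · have := Real.one_sub_inv_le_log_of_pos h
            rw [Real.negMulLog]
            have h3 := mul_le_mul_of_nonneg_left this h0
            rw [mul_sub, mul_inv_cancel₀ h.ne'] at h3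
            linarith
        refine h1.trans ?_
        have h2 : (P k)ᶜ ⊆ ⋃ n, D n := by
          intro x hx
          simp only [P, hk, Equiv.apply_symm_apply, Finset.notMem_empty, iff_false,
            Set.mem_compl_iff, Set.mem_ofPred_eq, not_forall, not_not] at hx
          obtain ⟨n, hn⟩ := hx
          exact Set.mem_iUnion.2 ⟨n, hn.1⟩
        have h3 : μ (P k)ᶜ ≤ ENNReal.ofReal (δ / 2) :=
          (measure_mono h2).trans ((measure_iUnion_le _).trans hsum)
        have h4 : μ.real (P k)ᶜ ≤ δ / 2 := ENNReal.toReal_le_of_le_ofReal (by positivity) h3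
        rw [probReal_compl_eq_one_sub (hP k)] at h4
        exact h4
      · rw [if_neg hk, add_zero]
        refine ENNReal.ofReal_le_ofReal (hvb k _ ENNReal.toReal_nonneg ?_)
        have hne : (e k).Nonempty := by
          rw [Finset.nonempty_iff_ne_empty]
          intro h; exact hk (by rw [← h, Equiv.symm_apply_apply])
        set n := (e k).max' hne with hn
        have h1 : P k ⊆ D n := fun x hx => ((hx n).2 (Finset.max'_mem _ _)).1
        have h2 : μ.real (P k) ≤ u n := (measureReal_mono h1).trans (hDu n)
        refine h2.trans ((min_le_right _ _).trans ?_)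
        have : e k ∈ (Finset.range (n + 1)).powerset := by
          rw [Finset.mem_powerset]
          intro i hi
          rw [Finset.mem_range]
          have := Finset.le_max' _ i hi
          omega
        refine (Finset.inf'_le _ this).trans ?_
        rw [Equiv.symm_apply_apply]
    refine (ENNReal.tsum_le_tsum hbound).trans ?_
    rw [ENNReal.tsum_add, tsum_ite_eq, ← ENNReal.ofReal_tsum_of_nonneg (fun n => (hw n).le)
      hwsum.summable, hwsum.tsum_eq, ← ENNReal.ofReal_add (by positivity) (by positivity)]
    simp
  · intro n
    refine ⟨{k | n ∈ e k}, ?_⟩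
    have h1 : D' n = ⋃ k ∈ {k | n ∈ e k}, P k := by
      ext x
      simp only [Set.mem_ofPred_eq, Set.mem_iUnion, exists_prop]
      constructor
      · intro hx
        exact ⟨e.symm (hfin x).toFinset, by simpa using hx, by simp [hmemP]⟩
      · rintro ⟨k, hk, hx⟩
        exact (hx n).2 hk
    rw [← h1]
    have : ∀ᵐ x ∂μ, x ∉ N := measure_eq_zero_iff_ae_notMem.1 hN0
    filter_upwards [this] with x hx
    simp only [D', eq_iff_iff]
    change x ∈ D n ↔ x ∈ D n \ N
    simp [hx]

/-! ### Separating pairs of points by few sets -/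

/-- If the sets `t i` almost surely separate `a x` from `b x`, then finitely many of them do so
up to small measure. -/
lemma exists_unseparated_lt {X : Type*} [MeasurableSpace X] (μ : Measure X)
    [IsProbabilityMeasure μ] {t : ℕ → Set X} (ht : ∀ n, MeasurableSet (t n)) {a b : X → X}
    (ha : Measurable a) (hb : Measurable b)
    (hsep : ∀ᵐ x ∂μ, ∃ i, ¬ (a x ∈ t i ↔ b x ∈ t i)) {η : ℝ} (hη : 0 < η) :
    ∃ n₀, ∀ n ≥ n₀, μ.real {x | ∀ i < n, (a x ∈ t i ↔ b x ∈ t i)} < η := by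
  let Z : ℕ → Set X := fun n => {x | ∀ i < n, (a x ∈ t i ↔ b x ∈ t i)}
  have hm : ∀ i, MeasurableSet {x | a x ∈ t i ↔ b x ∈ t i} := fun i =>
    (ha (ht i)).iff (hb (ht i))
  have hZ : ∀ n, MeasurableSet (Z n) := by
    intro n
    have : Z n = ⋂ i, ⋂ (_ : i < n), {x | a x ∈ t i ↔ b x ∈ t i} := by
      ext x; simp [Z]
    rw [this]
    exact MeasurableSet.iInter fun i => MeasurableSet.iInter fun _ => hm i
  have hanti : Antitone Z := fun m n hmn x hx i hi => hx i (hi.trans_le hmn)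
  have hlim := tendsto_measure_iInter_atTop (μ := μ) (fun n => (hZ n).nullMeasurableSet) hanti
    ⟨0, measure_ne_top _ _⟩
  have h0 : μ (⋂ n, Z n) = 0 := by
    rw [measure_eq_zero_iff_ae_notMem]
    filter_upwards [hsep] with x hx hx2
    obtain ⟨i, hi⟩ := hx
    exact hi (Set.mem_iInter.1 hx2 (i + 1) i (Nat.lt_succ_self i))
  rw [h0] at hlim
  have h3 := hlim.eventually (gt_mem_nhds (ENNReal.ofReal_pos.2 hη))
  obtain ⟨n₀, hn₀⟩ := eventually_atTop.1 h3
  exact ⟨n₀, fun n hn => (ENNReal.lt_ofReal_iff_toReal_lt (measure_ne_top _ _)).1 (hn₀ n hn)⟩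

open Classical in
/-- The colouring of points by their membership in `t 0, …, t (n - 1)`. -/
noncomputable def colour {X : Type*} (t : ℕ → Set X) (n : ℕ) (x : X) : Fin n → Bool :=
  fun i => decide (x ∈ t i)

lemma colour_eq_iff {X : Type*} (t : ℕ → Set X) (n : ℕ) (x y : X) :
    colour t n x = colour t n y ↔ ∀ i < n, (x ∈ t i ↔ y ∈ t i) := by
  simp only [colour, funext_iff, decide_eq_decide]
  exact ⟨fun h i hi => h ⟨i, hi⟩, fun h i => h i i.2⟩

lemma measurable_colour {X : Type*} [MeasurableSpace X] {t : ℕ → Set X}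
    (ht : ∀ n, MeasurableSet (t n)) (n : ℕ) : Measurable (colour t n) := by
  classical
  refine measurable_pi_lambda _ fun i => measurable_to_bool ?_
  convert ht i using 1
  ext x
  simp [colour]

/-- Exactly half of all two-colourings of a finite set agree on two given points. -/
lemma card_agree {V : Type*} [Fintype V] [DecidableEq V] {v w : V} (hvw : v ≠ w) :
    2 * (Finset.univ.filter fun ω : V → Bool => ω v = ω w).card = Fintype.card (V → Bool) := by
  have h := Finset.card_filter_add_card_filter_not (s := (Finset.univ : Finset (V → Bool)))
    (fun ω : V → Bool => ω v = ω w)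
  rw [Finset.card_univ] at h
  have h2 : (Finset.univ.filter fun ω : V → Bool => ω v = ω w).card =
      (Finset.univ.filter fun ω : V → Bool => ¬ ω v = ω w).card := by
    refine Finset.card_bij' (fun ω _ => Function.update ω v (!ω v))
      (fun ω _ => Function.update ω v (!ω v)) ?_ ?_ ?_ ?_
    · intro ω hω
      simp only [Finset.mem_filter, Finset.mem_univ, true_and] at hω ⊢
      simp [Function.update_of_ne hvw.symm, hω]
    · intro ω hω
      simp only [Finset.mem_filter, Finset.mem_univ, true_and] at hω ⊢
      simp only [Function.update_self, Function.update_of_ne hvw.symm]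
      revert hω
      cases ω v <;> cases ω w <;> simp
    · intro ω _; simp
    · intro ω _; simp
  omega

/-- If `a x ≠ b x` almost surely, some measurable set `C` separates `a x` from `b x` on at least
a third of any given set `S`: a random union of classes of a fine finite colouring separates about
half of the pairs. -/
lemma exists_cut {X : Type*} [MeasurableSpace X] [StandardBorelSpace X] (μ : Measure X)
    [IsProbabilityMeasure μ] {a b : X → X} (ha : Measurable a) (hb : Measurable b)
    (hab : ∀ᵐ x ∂μ, a x ≠ b x) {S : Set X} (hS : MeasurableSet S) :
    ∃ C, MeasurableSet C ∧ μ.real (S ∩ {x | a x ∈ C ↔ b x ∈ C}) ≤ 2 / 3 * μ.real S := by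
  classical
  rcases (measureReal_nonneg (μ := μ) (s := S)).eq_or_lt with hS0 | hSpos
  · refine ⟨∅, MeasurableSet.empty, ?_⟩
    rw [← hS0, mul_zero, hS0]
    exact measureReal_mono Set.inter_subset_left
  obtain ⟨t, ht, hts⟩ := exists_seq_separating X (p := MeasurableSet) MeasurableSet.empty Set.univ
  have hsep : ∀ᵐ x ∂μ, ∃ i, ¬ (a x ∈ t i ↔ b x ∈ t i) := by
    filter_upwards [hab] with x hx
    by_contra! h
    exact hx (hts _ trivial _ trivial h)
  obtain ⟨n, hn⟩ := exists_unseparated_lt μ ht ha hb hsep (show 0 < μ.real S / 6 by positivity)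
  specialize hn n le_rfl
  set Z : Set X := {x | ∀ i < n, (a x ∈ t i ↔ b x ∈ t i)} with hZ
  let C : ((Fin n → Bool) → Bool) → Set X := fun ω => {y | ω (colour t n y) = true}
  have hC : ∀ ω, MeasurableSet (C ω) := fun ω =>
    measurable_colour ht n (MeasurableSet.of_discrete (s := {v | ω v = true}))
  let U : ((Fin n → Bool) → Bool) → Set X := fun ω =>
    (S ∩ {x | a x ∈ C ω ↔ b x ∈ C ω}) \ Z
  have hZm : MeasurableSet Z := by
    have : Z = {x | colour t n (a x) = colour t n (b x)} := by
      ext x; simp [hZ, colour_eq_iff]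
    rw [this]
    exact measurableSet_eq_fun ((measurable_colour ht n).comp ha) ((measurable_colour ht n).comp hb)
  have hU : ∀ ω, MeasurableSet (U ω) := fun ω =>
    (hS.inter ((ha (hC ω)).iff (hb (hC ω)))).diff hZm
  have hsum : 2 * ∑ ω, μ (U ω) ≤ Fintype.card ((Fin n → Bool) → Bool) * μ S := by
    have h1 : ∀ ω, μ (U ω) = ∫⁻ x, (U ω).indicator 1 x ∂μ := fun ω =>
      (lintegral_indicator_one (hU ω)).symm
    have h2 : ∫⁻ x, S.indicator 1 x ∂μ = μ S := lintegral_indicator_one hS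
    have hmeas : ∀ ω, Measurable ((U ω).indicator (1 : X → ℝ≥0∞)) := fun ω =>
      measurable_one.indicator (hU ω)
    simp_rw [h1]
    rw [← h2, ← lintegral_finsetSum _ (fun ω _ => hmeas ω),
      ← lintegral_const_mul _ (Finset.measurable_sum _ fun ω _ => hmeas ω),
      ← lintegral_const_mul _ (measurable_one.indicator hS)]
    refine lintegral_mono fun x => ?_
    by_cases hx : x ∈ S \ Z
    · have hne : colour t n (a x) ≠ colour t n (b x) := fun h => hx.2 ((colour_eq_iff _ _ _ _).1 h)
      have h3 : ∑ ω, (U ω).indicator (1 : X → ℝ≥0∞) x =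
          ((Finset.univ.filter fun ω : (Fin n → Bool) → Bool =>
            ω (colour t n (a x)) = ω (colour t n (b x))).card : ℝ≥0∞) := by
        rw [Finset.card_filter]
        push_cast
        refine Finset.sum_congr rfl fun ω _ => ?_
        rw [Set.indicator_apply]
        refine if_congr ?_ rfl rfl
        simp only [U, C, Set.mem_sdiff, Set.mem_inter_iff, hx.1, hx.2, Set.mem_ofPred_eq]
        rw [Bool.eq_iff_iff]
        simp
      have h4 := card_agree hne
      simp only [h3]
      rw [Set.indicator_of_mem hx.1, ← h4]
      simp
    · have h3 : ∀ ω, (U ω).indicator (1 : X → ℝ≥0∞) x = 0 := fun ω =>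
        Set.indicator_of_notMem (fun h => hx ⟨h.1.1, h.2⟩) _
      simp [h3]
  have hex : ∃ ω, 2 * μ (U ω) ≤ μ S := by
    by_contra! h
    have h5 : ∑ ω : ((Fin n → Bool) → Bool), μ S < ∑ ω, 2 * μ (U ω) :=
      ENNReal.sum_lt_sum_of_nonempty Finset.univ_nonempty fun ω _ => h ω
    rw [Finset.sum_const, Finset.card_univ, nsmul_eq_mul, ← Finset.mul_sum] at h5
    exact absurd hsum (not_le.2 h5)
  obtain ⟨ω, hω⟩ := hex
  refine ⟨C ω, hC ω, ?_⟩
  have h6 : 2 * μ.real (U ω) ≤ μ.real S := by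
    have := ENNReal.toReal_mono (measure_ne_top μ S) hω
    simpa [ENNReal.toReal_mul, Measure.real] using this
  have h7 : μ.real (S ∩ {x | a x ∈ C ω ↔ b x ∈ C ω}) ≤ μ.real (U ω) + μ.real Z := by
    refine (measureReal_mono ?_).trans (measureReal_union_le _ _)
    intro x hx
    by_cases hz : x ∈ Z
    · exact Or.inr hz
    · exact Or.inl ⟨hx, hz⟩
  linarith

/-- Iteration of `exists_cut` on the set not yet separated: if `a j x ≠ b j x` almost surely for
every `j`, there are sets `C j` such that almost surely some `C j` separates `a j x` from
`b j x`. -/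
lemma exists_cut_seq {X : Type*} [MeasurableSpace X] [StandardBorelSpace X] (μ : Measure X)
    [IsProbabilityMeasure μ] {a b : ℕ → X → X} (ha : ∀ j, Measurable (a j))
    (hb : ∀ j, Measurable (b j)) (hab : ∀ j, ∀ᵐ x ∂μ, a j x ≠ b j x) :
    ∃ C : ℕ → Set X, (∀ j, MeasurableSet (C j)) ∧
      ∀ᵐ x ∂μ, ∃ j, ¬ (a j x ∈ C j ↔ b j x ∈ C j) := by
  choose c hc hcut using fun (j : ℕ) (S : {S : Set X // MeasurableSet S}) =>
    exists_cut μ (ha j) (hb j) (hab j) S.2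
  let next : ℕ → {S : Set X // MeasurableSet S} → {S : Set X // MeasurableSet S} := fun j S =>
    ⟨S.1 ∩ {x | a j x ∈ c j S ↔ b j x ∈ c j S},
      S.2.inter ((ha j (hc j S)).iff (hb j (hc j S)))⟩
  let S : ℕ → {S : Set X // MeasurableSet S} := fun j =>
    Nat.rec ⟨Set.univ, MeasurableSet.univ⟩ next j
  have hSs : ∀ j, S (j + 1) = next j (S j) := fun j => rfl
  refine ⟨fun j => c j (S j), fun j => hc j _, ?_⟩
  have hbd : ∀ j, μ.real (S j).1 ≤ (2 / 3) ^ j := by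
    intro j
    induction j with
    | zero => simp [S]
    | succ j ih =>
      rw [hSs, pow_succ]
      have := hcut j (S j)
      change μ.real ((S j).1 ∩ {x | a j x ∈ c j (S j) ↔ b j x ∈ c j (S j)}) ≤ _
      linarith
  have hsub : ∀ x, (∀ j, (a j x ∈ c j (S j) ↔ b j x ∈ c j (S j))) → ∀ j, x ∈ (S j).1 := by
    intro x hx j
    induction j with
    | zero => exact Set.mem_univ x
    | succ j ih => exact ⟨ih, hx j⟩
  have h0 : μ (⋂ j, (S j).1) = 0 := by
    have : μ.real (⋂ j, (S j).1) ≤ 0 := by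
      refine ge_of_tendsto' (tendsto_pow_atTop_nhds_zero_of_lt_one (r := (2 / 3 : ℝ))
        (by norm_num) (by norm_num)) fun j => ?_
      exact (measureReal_mono (Set.iInter_subset _ j)).trans (hbd j)
    have h2 := le_antisymm this measureReal_nonneg
    rwa [measureReal_eq_zero_iff] at h2
  filter_upwards [measure_eq_zero_iff_ae_notMem.1 h0] with x hx
  by_contra! h
  exact hx (Set.mem_iInter.2 (hsub x h))

/-! ### A free factor generated by small sets -/

lemma measureReal_smul_preimage {Γ X : Type*} [Group Γ] [MeasurableSpace X] [MulAction Γ X]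
    (μ : Measure X) (hmeas : ∀ g : Γ, Measurable fun x : X => g • x)
    (hmp : ∀ g : Γ, Measure.map (fun x : X => g • x) μ = μ) (g : Γ) {s : Set X}
    (hs : MeasurableSet s) : μ.real ((fun x => g • x) ⁻¹' s) = μ.real s := by
  conv_rhs => rw [← hmp g]
  rw [map_measureReal_apply (hmeas g) hs]

section Action

variable {Γ X : Type*} [Group Γ] [mX : MeasurableSpace X]
  [MulAction Γ X] (μ : Measure X) [IsProbabilityMeasure μ]

/-- Freeness gives a set of positive measure disjoint from its translates by finitely many given
nontrivial group elements. -/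
lemma exists_disjoint_translates [StandardBorelSpace X]
    (hmeas : ∀ g : Γ, Measurable fun x : X => g • x)
    (hfree : ∀ g : Γ, g ≠ 1 → ∀ᵐ x ∂μ, g • x ≠ x) (W : Finset Γ) :
    ∃ C : Set X, MeasurableSet C ∧ 0 < μ C ∧ ∀ g ∈ W, g ≠ 1 → ∀ x ∈ C, g • x ∉ C := by
  classical
  obtain ⟨t, ht, hts⟩ := exists_seq_separating X (p := MeasurableSet) MeasurableSet.empty Set.univ
  induction W using Finset.induction_on with
  | empty => exact ⟨Set.univ, MeasurableSet.univ, by simp, by simp⟩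
  | insert g W hg ih =>
    obtain ⟨C, hC, hpos, hdis⟩ := ih
    by_cases hg1 : g = 1
    · refine ⟨C, hC, hpos, fun k hk hk1 => ?_⟩
      rcases Finset.mem_insert.1 hk with rfl | hk
      · exact absurd hg1 hk1
      · exact hdis k hk hk1
    -- `V i` and `V' i` are the points of `C` that are separated from their `g`-translate by `t i`
    let V : ℕ → Set X := fun i => C ∩ (t i ∩ (fun x => g • x) ⁻¹' (t i)ᶜ)
    let V' : ℕ → Set X := fun i => C ∩ ((t i)ᶜ ∩ (fun x => g • x) ⁻¹' (t i))
    have hV : ∀ i, MeasurableSet (V i) := fun i =>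
      hC.inter ((ht i).inter (hmeas g (ht i).compl))
    have hV' : ∀ i, MeasurableSet (V' i) := fun i =>
      hC.inter ((ht i).compl.inter (hmeas g (ht i)))
    have hcov : μ C ≤ μ (⋃ i, V i ∪ V' i) := by
      refine measure_mono_ae ?_
      filter_upwards [hfree g hg1] with x hx hxC
      have : ∃ i, ¬ (g • x ∈ t i ↔ x ∈ t i) := by
        by_contra! h
        exact hx (hts _ trivial _ trivial h)
      obtain ⟨i, hi⟩ := this
      refine Set.mem_iUnion.2 ⟨i, ?_⟩
      by_cases h1 : x ∈ t i
      · exact Or.inl ⟨hxC, h1, fun h2 => hi (by tauto)⟩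
      · exact Or.inr ⟨hxC, h1, by_contra fun h2 => hi (by tauto)⟩
    have : ∃ i, μ (V i ∪ V' i) ≠ 0 := by
      by_contra! h
      have := measure_iUnion_null h
      rw [this] at hcov
      exact absurd hcov (not_le.2 hpos)
    obtain ⟨i, hi⟩ := this
    have hV2 : 0 < μ (V i) ∨ 0 < μ (V' i) := by
      by_contra! h
      exact hi (measure_union_null (le_antisymm h.1 zero_le) (le_antisymm h.2 zero_le))
    rcases hV2 with h | h
    · refine ⟨V i, hV i, h, fun k hk hk1 x hx hkx => ?_⟩
      rcases Finset.mem_insert.1 hk with rfl | hk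
      · exact hx.2.2 hkx.2.1
      · exact hdis k hk hk1 x hx.1 hkx.1
    · refine ⟨V' i, hV' i, h, fun k hk hk1 x hx hkx => ?_⟩
      rcases Finset.mem_insert.1 hk with rfl | hk
      · exact hkx.2.1 hx.2.2
      · exact hdis k hk hk1 x hx.1 hkx.1

/-- A free action of an infinite group has sets of positive, arbitrarily small measure: a set with
many disjoint translates is small. -/
lemma exists_small_set [Infinite Γ] [StandardBorelSpace X]
    (hmeas : ∀ g : Γ, Measurable fun x : X => g • x)
    (hmp : ∀ g : Γ, Measure.map (fun x : X => g • x) μ = μ)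
    (hfree : ∀ g : Γ, g ≠ 1 → ∀ᵐ x ∂μ, g • x ≠ x) {u : ℝ} (hu : 0 < u) :
    ∃ C : Set X, MeasurableSet C ∧ 0 < μ C ∧ μ.real C ≤ u := by
  classical
  obtain ⟨n, hn⟩ := exists_nat_gt (1 / u)
  obtain ⟨T, hT⟩ := Infinite.exists_subset_card_eq Γ n
  obtain ⟨C, hC, hpos, hdis⟩ := exists_disjoint_translates μ hmeas hfree
    ((T ×ˢ T).image fun p => p.2 * p.1⁻¹)
  refine ⟨C, hC, hpos, ?_⟩
  have hpd : (T : Set Γ).PairwiseDisjoint fun g => (fun x : X => g • x) ⁻¹' C := by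
    intro g hg k hk hgk
    refine Set.disjoint_left.2 fun x hx hx2 => ?_
    refine hdis (k * g⁻¹) ?_ (fun h => hgk (by rw [mul_inv_eq_one] at h; exact h.symm)) (g • x) hx ?_
    · exact Finset.mem_image.2 ⟨(g, k), Finset.mem_product.2 ⟨hg, hk⟩, rfl⟩
    · simpa [smul_smul] using hx2
  have h1 : μ.real (⋃ g ∈ T, (fun x : X => g • x) ⁻¹' C) = ∑ g ∈ T, μ.real C := by
    rw [measureReal_biUnion_finset hpd fun g _ => hmeas g hC]
    exact Finset.sum_congr rfl fun g _ => measureReal_smul_preimage μ hmeas hmp g hC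
  rw [Finset.sum_const, hT, nsmul_eq_mul] at h1
  have h2 : (n : ℝ) * μ.real C ≤ 1 := h1 ▸ measureReal_le_one
  rw [div_lt_iff₀ hu] at hn
  by_contra! h3
  have hnpos : (0 : ℝ) < n := by
    by_contra! h
    nlinarith
  nlinarith

/-- There are sets `D n` of prescribed small measures which generate a free factor: their
translates separate `x` from `g • x`. For each `g ≠ 1` one uses small sets `A j`, which almost
every orbit meets, and cuts `A j ∩ C j` of them; the first visit of `x` to `A j` is compared with
the corresponding translate of `g • x`. -/
lemma exists_free_factor [Infinite Γ] [Countable Γ] [StandardBorelSpace X]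
    (hmeas : ∀ g : Γ, Measurable fun x : X => g • x)
    (hmp : ∀ g : Γ, Measure.map (fun x : X => g • x) μ = μ)
    (hfree : ∀ g : Γ, g ≠ 1 → ∀ᵐ x ∂μ, g • x ≠ x)
    (hergodic : ∀ s : Set X, MeasurableSet s → (∀ g : Γ, (fun x => g • x) ⁻¹' s = s) →
      μ s = 0 ∨ μ s = 1) {u : ℕ → ℝ} (hu : ∀ n, 0 < u n) :
    ∃ D : ℕ → Set X, (∀ n, MeasurableSet (D n)) ∧ (∀ n, μ.real (D n) ≤ u n) ∧
      ∀ g : Γ, g ≠ 1 → ∀ᵐ x ∂μ, ∃ (h : Γ) (n : ℕ), ¬ (h • g • x ∈ D n ↔ h • x ∈ D n) := by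
  classical
  obtain ⟨e⟩ : Nonempty (Γ × ℕ × Bool ≃ ℕ) := nonempty_equiv_of_countable
  choose A hA hApos hAu using fun (g : Γ) (j : ℕ) => exists_small_set μ hmeas hmp hfree
    (lt_min (hu (e (g, j, false))) (hu (e (g, j, true))))
  obtain ⟨f, hf⟩ := exists_surjective_nat Γ
  let p : Γ → ℕ → ℕ → X → Prop := fun g j n x => f n • x ∈ A g j ∨ ∀ m, f m • x ∉ A g j
  have hp : ∀ g j n, MeasurableSet {x | p g j n x} := by
    intro g j n
    have h1 : MeasurableSet {x | f n • x ∈ A g j} := hmeas (f n) (hA g j)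
    have h2 : MeasurableSet {x : X | ∀ m, f m • x ∉ A g j} := by
      have : {x : X | ∀ m, f m • x ∉ A g j} = ⋂ m, (fun x => f m • x) ⁻¹' (A g j)ᶜ := by
        ext x; simp
      rw [this]
      exact MeasurableSet.iInter fun m => hmeas (f m) (hA g j).compl
    exact h1.union h2
  have hex : ∀ g j x, ∃ n, p g j n x := by
    intro g j x
    by_cases h : ∃ m, f m • x ∈ A g j
    · exact ⟨h.choose, Or.inl h.choose_spec⟩
    · exact ⟨0, Or.inr (not_exists.1 h)⟩
  let v : Γ → ℕ → X → Γ := fun g j x => f (Nat.find (hex g j x))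
  have ha : ∀ g j, Measurable fun x => v g j x • x := fun g j =>
    Measurable.find (f := fun n x => f n • x) (fun n => hmeas (f n)) (hp g j) (hex g j)
  have hb : ∀ g j, Measurable fun x => v g j x • g • x := fun g j =>
    Measurable.find (f := fun n x => f n • g • x) (fun n => (hmeas (f n)).comp (hmeas g))
      (hp g j) (hex g j)
  have hvisit : ∀ g j, ∀ᵐ x ∂μ, v g j x • x ∈ A g j := by
    intro g j
    let I : Set X := ⋃ k : Γ, (fun x => k • x) ⁻¹' A g j
    have hI : MeasurableSet I := MeasurableSet.iUnion fun k => hmeas k (hA g j)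
    have hinv : ∀ k : Γ, (fun x => k • x) ⁻¹' I = I := by
      intro k
      ext x
      simp only [I, Set.mem_preimage, Set.mem_iUnion, smul_smul]
      exact ⟨fun ⟨l, hl⟩ => ⟨l * k, hl⟩, fun ⟨l, hl⟩ => ⟨l * k⁻¹, by simpa using hl⟩⟩
    have hI0 : μ I ≠ 0 := by
      intro h
      refine (hApos g j).ne' (measure_mono_null ?_ h)
      intro x hx
      exact Set.mem_iUnion.2 ⟨1, by simpa using hx⟩
    have hI1 : μ I = 1 := (hergodic I hI hinv).resolve_left hI0
    have hae : ∀ᵐ x ∂μ, x ∈ I := by rwa [← prob_compl_eq_zero_iff hI] at hI1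
    filter_upwards [hae] with x hx
    obtain ⟨k, hk⟩ := Set.mem_iUnion.1 hx
    obtain ⟨m, rfl⟩ := hf k
    exact (Nat.find_spec (hex g j x)).resolve_right fun h => h m hk
  have hcut : ∀ g : Γ, ∃ C : ℕ → Set X, (∀ j, MeasurableSet (C j)) ∧ (g ≠ 1 →
      ∀ᵐ x ∂μ, ∃ j, ¬ (v g j x • x ∈ C j ↔ v g j x • g • x ∈ C j)) := by
    intro g
    by_cases hg : g = 1
    · exact ⟨fun _ => ∅, fun _ => MeasurableSet.empty, fun h => absurd hg h⟩
    · obtain ⟨C, hC, hC2⟩ := exists_cut_seq μ (ha g) (hb g) (fun j => by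
        filter_upwards [hfree g hg] with x hx h
        exact hx (smul_left_cancel _ h).symm)
      exact ⟨C, hC, fun _ => hC2⟩
  choose C hC hC2 using hcut
  let D' : Γ × ℕ × Bool → Set X := fun q =>
    bif q.2.2 then A q.1 q.2.1 ∩ C q.1 q.2.1 else A q.1 q.2.1
  refine ⟨fun n => D' (e.symm n), fun n => ?_, fun n => ?_, fun g hg => ?_⟩
  · obtain ⟨⟨g, j, c⟩, rfl⟩ := e.surjective n
    beta_reduce
    rw [Equiv.symm_apply_apply]
    cases c
    · exact hA g j
    · exact (hA g j).inter (hC g j)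
  · obtain ⟨⟨g, j, c⟩, rfl⟩ := e.surjective n
    beta_reduce
    rw [Equiv.symm_apply_apply]
    cases c
    · exact (hAu g j).trans (min_le_left _ _)
    · exact (measureReal_mono Set.inter_subset_left).trans ((hAu g j).trans (min_le_right _ _))
  · filter_upwards [hC2 g hg, ae_all_iff.2 (hvisit g)] with x hx hv
    obtain ⟨j, hj⟩ := hx
    by_contra! h
    have h1 := h (v g j x) (e (g, j, false))
    have h2 := h (v g j x) (e (g, j, true))
    rw [Equiv.symm_apply_apply] at h1 h2
    simp only [D', cond_false, cond_true, Set.mem_inter_iff] at h1 h2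
    have := hv j
    tauto

/-! ### Label patterns and one decoding step -/

/-- The label of a point: `0` off `L`, and on `L` the information whether the point is in `A`
(label `1`) or not (label `2`). -/
noncomputable def lab (A L : Set X) (x : X) : Fin 3 :=
  open Classical in if x ∈ L then (if x ∈ A then 1 else 2) else 0

/-- The field of labels seen from `x` along its orbit. -/
noncomputable def pattern (Γ : Type*) {X : Type*} [Group Γ] [MulAction Γ X] (A L : Set X) (x : X) :
    Γ → Fin 3 := fun g => lab A L (g • x)

/-- The partition of `X` by labels, padded with empty pieces. -/
def labPart (A L : Set X) (n : ℕ) : Set X := {x | (lab A L x : ℕ) = n}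

/-- A set of patterns that is determined by the coordinates in `F`. -/
def LocalOn (F : Finset Γ) (φ : Set (Γ → Fin 3)) : Prop :=
  ∀ p q : Γ → Fin 3, (∀ f ∈ F, p f = q f) → (p ∈ φ ↔ q ∈ φ)

lemma measurable_lab {X : Type*} [MeasurableSpace X] {A L : Set X} (hL : MeasurableSet L)
    (hA : MeasurableSet (A ∩ L)) : Measurable (lab A L) := by
  classical
  have : lab A L = fun x => if x ∈ L then (if x ∈ A ∩ L then 1 else 2) else 0 := by
    funext x
    by_cases h : x ∈ L <;> simp [lab, h]
  rw [this]
  exact Measurable.ite hL (Measurable.ite hA measurable_const measurable_const) measurable_const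

lemma measurable_pattern {Γ X : Type*} [Group Γ] [MulAction Γ X] [MeasurableSpace X] {A L : Set X}
    (hmeas : ∀ g : Γ, Measurable fun x : X => g • x) (hL : MeasurableSet L)
    (hA : MeasurableSet (A ∩ L)) : Measurable (pattern Γ A L) :=
  measurable_pi_lambda _ fun g => (measurable_lab hL hA).comp (hmeas g)

lemma labPart_one {X : Type*} (A L : Set X) : labPart A L 1 = L ∩ A := by
  classical
  ext x
  by_cases h : x ∈ L <;> by_cases h2 : x ∈ A <;> simp [labPart, lab, h, h2]

/-- Sets of the `σ`-algebra generated by translates along `Φ` of the labels are approximated by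
sets read off from finitely many labels at positions in `Φ`. -/
lemma exists_pattern_approx (hmeas : ∀ g : Γ, Measurable fun x : X => g • x) {A L : Set X}
    (hA : MeasurableSet A) (hL : MeasurableSet L) {Φ : Set Γ} (hΦ : (1 : Γ) ∉ Φ) {B : Set X}
    (hB : MeasurableSet[partSigma (labPart A L) Φ] B) {η : ℝ} (hη : 0 < η) :
    ∃ (F : Finset Γ) (φ : Set (Γ → Fin 3)), (1 : Γ) ∉ F ∧ MeasurableSet φ ∧ LocalOn F φ ∧
      μ.real (B ∆ (pattern Γ A L ⁻¹' φ)) ≤ η := by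
  classical
  have hpat : Measurable (pattern Γ A L) := measurable_pattern hmeas hL (hA.inter hL)
  let P : Set X → Prop := fun s => MeasurableSet s ∧ ∀ η : ℝ, 0 < η →
    ∃ (F : Finset Γ) (φ : Set (Γ → Fin 3)), (1 : Γ) ∉ F ∧ MeasurableSet φ ∧ LocalOn F φ ∧
      μ.real (s ∆ (pattern Γ A L ⁻¹' φ)) ≤ η
  have hempty : P ∅ := ⟨MeasurableSet.empty, fun η hη =>
    ⟨∅, ∅, by simp, MeasurableSet.empty, fun _ _ _ => Iff.rfl, by simpa using hη.le⟩⟩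
  have hunion : ∀ s s', P s → P s' → P (s ∪ s') := by
    intro s s' hs hs'
    refine ⟨hs.1.union hs'.1, fun η hη => ?_⟩
    obtain ⟨F, φ, hF, hφ, hloc, hle⟩ := hs.2 (η / 2) (by positivity)
    obtain ⟨F', φ', hF', hφ', hloc', hle'⟩ := hs'.2 (η / 2) (by positivity)
    refine ⟨F ∪ F', φ ∪ φ', by simp [hF, hF'], hφ.union hφ', fun p q h => ?_, ?_⟩
    · exact or_congr (hloc p q fun f hf => h f (Finset.mem_union_left _ hf))
        (hloc' p q fun f hf => h f (Finset.mem_union_right _ hf))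
    · have : μ.real ((s ∪ s') ∆ (pattern Γ A L ⁻¹' (φ ∪ φ'))) ≤
          μ.real (s ∆ (pattern Γ A L ⁻¹' φ)) + μ.real (s' ∆ (pattern Γ A L ⁻¹' φ')) := by
        refine (measureReal_mono ?_).trans (measureReal_union_le _ _)
        intro x
        simp only [Set.mem_symmDiff, Set.mem_union, Set.mem_preimage]
        tauto
      linarith
  suffices h : P B from h.2 η hη
  refine MeasurableSpace.generateFrom_induction _ (fun s _ => P s) ?_ hempty ?_ ?_ B hB
  · rintro s ⟨g, hg, i, rfl⟩ -
    have heq : (fun x => g • x) ⁻¹' labPart A L i =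
        pattern Γ A L ⁻¹' ((fun p => p g) ⁻¹' {c : Fin 3 | (c : ℕ) = i}) := rfl
    have hφ : MeasurableSet ((fun p : Γ → Fin 3 => p g) ⁻¹' {c : Fin 3 | (c : ℕ) = i}) :=
      measurable_pi_apply g MeasurableSet.of_discrete
    refine ⟨heq ▸ hpat hφ, fun η hη => ⟨{g}, _, ?_, hφ, ?_, ?_⟩⟩
    · rw [Finset.mem_singleton]
      rintro rfl
      exact hΦ hg
    · intro p q h
      have := h g (Finset.mem_singleton_self g)
      simp [this]
    · rw [heq, symmDiff_self]
      simpa using hη.le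
  · rintro s - ⟨hs, hap⟩
    refine ⟨hs.compl, fun η hη => ?_⟩
    obtain ⟨F, φ, hF, hφ, hloc, hle⟩ := hap η hη
    refine ⟨F, φᶜ, hF, hφ.compl, fun p q h => not_congr (hloc p q h), ?_⟩
    rwa [Set.preimage_compl, compl_symmDiff_compl]
  · rintro s - hs
    refine ⟨MeasurableSet.iUnion fun n => (hs n).1, fun η hη => ?_⟩
    have hacc : ∀ n, P (Set.accumulate s n) := by
      intro n
      induction n with
      | zero => simpa using hs 0
      | succ n ih =>
        rw [Set.accumulate_succ]
        exact hunion _ _ ih (hs _)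
    have hlim := tendsto_measure_iUnion_accumulate (μ := μ) (f := s)
    have hlim2 : Tendsto (fun n => μ.real (Set.accumulate s n)) atTop (nhds (μ.real (⋃ i, s i))) :=
      (ENNReal.tendsto_toReal (measure_ne_top _ _)).comp hlim
    obtain ⟨n, hn⟩ := (hlim2.eventually (lt_mem_nhds
      (show μ.real (⋃ i, s i) - η / 2 < μ.real (⋃ i, s i) by linarith))).exists
    obtain ⟨F, φ, hF, hφ, hloc, hle⟩ := (hacc n).2 (η / 2) (by positivity)
    refine ⟨F, φ, hF, hφ, hloc, ?_⟩
    have hsub : Set.accumulate s n ⊆ ⋃ i, s i := Set.accumulate_subset_iUnion n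
    have h1 : μ.real ((⋃ i, s i) \ Set.accumulate s n) =
        μ.real (⋃ i, s i) - μ.real (Set.accumulate s n) :=
      measureReal_sdiff hsub (hacc n).1
    have h2 : μ.real ((⋃ i, s i) ∆ (pattern Γ A L ⁻¹' φ)) ≤
        μ.real ((⋃ i, s i) \ Set.accumulate s n) +
          μ.real (Set.accumulate s n ∆ (pattern Γ A L ⁻¹' φ)) := by
      refine (measureReal_mono ?_).trans (measureReal_union_le _ _)
      intro x hx
      have := @hsub x
      simp only [Set.mem_symmDiff, Set.mem_union, Set.mem_sdiff] at *
      tauto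
    linarith

end Action

section Coding

-- `m` is bound before `mX` so that `mX` is the default measurable structure
variable {Γ X : Type*} {m : MeasurableSpace X} [Group Γ] [mX : MeasurableSpace X]
  [MulAction Γ X] (μ : Measure X) [IsProbabilityMeasure μ]

/-- One step of the decoding scheme. When `A` is predictable from labels on `M`, and `L` is only
slightly larger than `M`, there is a piece `K` of `L` of measure bounded below on which `A` is
read off, up to a small proportion of errors, from the labels on `L \ K`. The piece is a class of
a fine colouring, so that most points of `K` have none of their finitely many relevant translates
in `K`. -/
lemma exists_step (hmeas : ∀ g : Γ, Measurable fun x : X => g • x)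
    (hmp : ∀ g : Γ, Measure.map (fun x : X => g • x) μ = μ) {A : Set X} (hA : MeasurableSet A)
    (hm : m ≤ mX) {t : ℕ → Set X} (ht : ∀ n, MeasurableSet[m] (t n))
    (hsep : ∀ g : Γ, g ≠ 1 → ∀ᵐ x ∂μ, ∃ i, ¬ (g • x ∈ t i ↔ x ∈ t i))
    {ε : ℝ} (hε : 0 < ε) {M : Set X} (hM : MeasurableSet[m] M) (hMε : ε ≤ μ.real M)
    (hP : ∀ η : ℝ, 0 < η → ∃ (F : Finset Γ) (φ : Set (Γ → Fin 3)), (1 : Γ) ∉ F ∧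
      MeasurableSet φ ∧ LocalOn F φ ∧ μ.real ((M ∩ A) ∆ (pattern Γ A M ⁻¹' φ)) ≤ η) :
    ∃ κ ρ : ℝ, 0 < κ ∧ 0 < ρ ∧ ∀ L : Set X, MeasurableSet[m] L → M ⊆ L → μ.real (L \ M) ≤ ρ →
      ∃ (K : Set X) (φ : Set (Γ → Fin 3)), MeasurableSet[m] K ∧ K ⊆ L ∧ κ ≤ μ.real K ∧
        MeasurableSet φ ∧
        μ.real (K ∩ (A ∆ (pattern Γ A (L \ K) ⁻¹' φ))) ≤ 4 * ε * μ.real K := by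
  classical
  obtain ⟨F, φ, hF, hφ, hloc, hle⟩ := hP (ε ^ 2) (by positivity)
  have hunsep : ∀ f ∈ F, ∃ n₀, ∀ n ≥ n₀,
      μ.real {x | ∀ i < n, (f • x ∈ t i ↔ x ∈ t i)} < ε ^ 2 / (F.card + 1) := by
    intro f hf
    have hf1 : f ≠ 1 := fun h => hF (h ▸ hf)
    exact exists_unseparated_lt μ (fun n => hm _ (ht n)) (hmeas f) measurable_id (hsep f hf1)
      (by positivity)
  choose! n₀ hn₀ using hunsep
  let n := F.sup n₀
  let N : ℝ := Fintype.card (Fin n → Bool)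
  have hN : 0 < N := Nat.cast_pos.2 Fintype.card_pos
  let Z : Set X := ⋃ f ∈ F, {x | ∀ i < n, (f • x ∈ t i ↔ x ∈ t i)}
  have hcard : (F.card : ℝ) * (ε ^ 2 / (F.card + 1)) ≤ ε ^ 2 := by
    rw [mul_div_assoc', div_le_iff₀ (by positivity)]
    nlinarith [sq_nonneg ε]
  have hZ : μ.real Z ≤ ε ^ 2 := by
    refine (measureReal_biUnion_finset_le _ _).trans (le_trans ?_ hcard)
    rw [← nsmul_eq_mul]
    exact Finset.sum_le_card_nsmul _ _ _ fun f hf => (hn₀ f hf n (Finset.le_sup hf)).le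
  refine ⟨ε / (4 * N), ε ^ 2 / (F.card + 1), by positivity, by positivity, ?_⟩
  intro L hL hML hLM
  have hLm := hm _ hL
  have hMm := hm _ hM
  have hdm : MeasurableSet (L \ M) := hLm.diff hMm
  let W : Set X := Z ∪ (A ∆ (pattern Γ A L ⁻¹' φ))
  have hW : μ.real (L ∩ W) ≤ 3 * ε ^ 2 := by
    have hsub : L ∩ W ⊆ (Z ∪ ((M ∩ A) ∆ (pattern Γ A M ⁻¹' φ))) ∪
        ((L \ M) ∪ ⋃ f ∈ F, (fun x => f • x) ⁻¹' (L \ M)) := by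
      rintro x ⟨hxL, hxW⟩
      by_contra hx
      simp only [Set.mem_union, not_or] at hx
      obtain ⟨⟨hxZ, hxM⟩, hxLM, hxF⟩ := hx
      have hxM' : x ∈ M := by_contra fun h => hxLM ⟨hxL, h⟩
      have hpq : pattern Γ A L x ∈ φ ↔ pattern Γ A M x ∈ φ := by
        refine hloc _ _ fun f hf => ?_
        have h1 : f • x ∉ L \ M := fun h => hxF (Set.mem_biUnion hf h)
        have h2 : f • x ∈ L ↔ f • x ∈ M :=
          ⟨fun h => by_contra fun h' => h1 ⟨h, h'⟩, fun h => hML h⟩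
        simp [pattern, lab, h2]
      rcases hxW with h | h
      · exact hxZ h
      · apply hxM
        simp only [Set.mem_symmDiff, Set.mem_inter_iff, Set.mem_preimage] at h ⊢
        tauto
    have h1 : μ.real (⋃ f ∈ F, (fun x => f • x) ⁻¹' (L \ M)) ≤
        F.card * (ε ^ 2 / (F.card + 1)) := by
      refine (measureReal_biUnion_finset_le _ _).trans ?_
      rw [← nsmul_eq_mul]
      refine Finset.sum_le_card_nsmul _ _ _ fun f _ => ?_
      rwa [measureReal_smul_preimage μ hmeas hmp f hdm]
    have h2 := measureReal_mono (μ := μ) hsub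
    have h3 := measureReal_union_le (μ := μ) (Z ∪ ((M ∩ A) ∆ (pattern Γ A M ⁻¹' φ)))
        ((L \ M) ∪ ⋃ f ∈ F, (fun x => f • x) ⁻¹' (L \ M))
    have h4 := measureReal_union_le (μ := μ) Z ((M ∩ A) ∆ (pattern Γ A M ⁻¹' φ))
    have h5 := measureReal_union_le (μ := μ) (L \ M) (⋃ f ∈ F, (fun x => f • x) ⁻¹' (L \ M))
    have h6 : ε ^ 2 / (F.card + 1) + F.card * (ε ^ 2 / (F.card + 1)) = ε ^ 2 := by
      field_simp
      ring
    linarith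
  have hcol : Measurable[m] (colour t n) := @measurable_colour X m t ht n
  let K : (Fin n → Bool) → Set X := fun c => L ∩ colour t n ⁻¹' {c}
  have hK : ∀ c, MeasurableSet[m] (K c) := fun c =>
    @MeasurableSet.inter X m _ _ hL (hcol (MeasurableSet.singleton c))
  have hdisj : ∀ V : Set X, Pairwise fun c c' => Disjoint (K c ∩ V) (K c' ∩ V) := by
    intro V c c' hcc
    refine Set.disjoint_left.2 fun x hx hx' => hcc ?_
    exact hx.1.2.symm.trans hx'.1.2
  have hsumK : ∑ c, μ.real (K c) = μ.real L := by
    have h := measureReal_iUnion_fintype (μ := μ) (f := K)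
      (by simpa using hdisj Set.univ) (fun c => hm _ (hK c))
    rw [← h]
    congr 1
    ext x
    simp [K]
  have hWm : MeasurableSet W := by
    refine MeasurableSet.union ?_ (hA.symmDiff
      (measurable_pattern hmeas hLm (hA.inter hLm) hφ))
    refine Finset.measurableSet_biUnion _ fun f _ => ?_
    have : {x : X | ∀ i < n, (f • x ∈ t i ↔ x ∈ t i)} =
        ⋂ i, ⋂ (_ : i < n), {x | f • x ∈ t i ↔ x ∈ t i} := by
      ext x; simp
    rw [this]
    exact MeasurableSet.iInter fun i => MeasurableSet.iInter fun _ =>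
      (hmeas f (hm _ (ht i))).iff (hm _ (ht i))
  have hsumW : ∑ c, μ.real (K c ∩ W) = μ.real (L ∩ W) := by
    have h := measureReal_iUnion_fintype (μ := μ) (f := fun c => K c ∩ W)
      (hdisj W) (fun c => (hm _ (hK c)).inter hWm)
    rw [← h]
    congr 1
    ext x
    simp [K]
  have hμL : ε ≤ μ.real L := hMε.trans (measureReal_mono hML)
  obtain ⟨c, hc⟩ : ∃ c, ε ^ 2 / N ≤ 4 * ε * μ.real (K c) - μ.real (K c ∩ W) := by
    by_contra! h
    have h1 : ∑ c, (4 * ε * μ.real (K c) - μ.real (K c ∩ W)) <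
        ∑ _c : Fin n → Bool, ε ^ 2 / N :=
      Finset.sum_lt_sum_of_nonempty Finset.univ_nonempty fun c _ => h c
    rw [Finset.sum_sub_distrib, ← Finset.mul_sum, hsumK, hsumW, Finset.sum_const,
      Finset.card_univ, nsmul_eq_mul] at h1
    have h2 : (Fintype.card (Fin n → Bool) : ℝ) * (ε ^ 2 / N) = ε ^ 2 :=
      mul_div_cancel₀ _ hN.ne'
    rw [h2] at h1
    nlinarith
  refine ⟨K c, φ, hK c, Set.inter_subset_left, ?_, hφ, ?_⟩
  · have h0 : 0 ≤ μ.real (K c ∩ W) := measureReal_nonneg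
    have h1 : ε ^ 2 / N = 4 * ε * (ε / (4 * N)) := by
      field_simp
    rw [h1] at hc
    have : 4 * ε * (ε / (4 * N)) ≤ 4 * ε * μ.real (K c) := by linarith
    exact le_of_mul_le_mul_left this (by positivity)
  · have hsub : K c ∩ (A ∆ (pattern Γ A (L \ K c) ⁻¹' φ)) ⊆ K c ∩ W := by
      rintro x ⟨hxK, hx⟩
      refine ⟨hxK, ?_⟩
      by_cases hxZ : x ∈ Z
      · exact Or.inl hxZ
      refine Or.inr ?_
      have hpq : pattern Γ A (L \ K c) x ∈ φ ↔ pattern Γ A L x ∈ φ := by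
        refine hloc _ _ fun f hf => ?_
        have h1 : f • x ∉ K c := by
          intro h
          refine hxZ (Set.mem_biUnion hf ?_)
          exact (colour_eq_iff t n _ _).1 (h.2.trans hxK.2.symm)
        simp [pattern, lab, h1]
      simp only [Set.mem_symmDiff, Set.mem_preimage] at hx ⊢
      tauto
    have h1 := measureReal_mono (μ := μ) hsub
    have h2 : 0 ≤ ε ^ 2 / N := by positivity
    linarith

/-! ### Greedy encoding of a predictable set -/

/-- The pair `(L, E)` encodes `A` off `L`: the small error set `E`, which lies off `L`, together
with the part of `A` inside `L` determines `A`, relative to the invariant `σ`-algebra `m`. -/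
structure Reach (Γ : Type*) {X : Type*} (m : MeasurableSpace X) [Group Γ] [mX : MeasurableSpace X]
    [MulAction Γ X] (μ : Measure X) (A : Set X) (ε : ℝ) (L E : Set X) : Prop where
  measL : MeasurableSet[m] L
  measE : MeasurableSet E
  sub : E ⊆ Lᶜ
  small : μ.real E ≤ 4 * ε * μ.real Lᶜ
  decode : ∀ m' : MeasurableSpace X, m ≤ m' → (∀ g : Γ, Measurable[m', m'] fun x : X => g • x) →
    MeasurableSet[m'] E → MeasurableSet[m'] (A ∩ L) → MeasurableSet[m'] A

lemma Reach.univ {Γ X : Type*} {m : MeasurableSpace X} [Group Γ] [MeasurableSpace X]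
    [MulAction Γ X] (μ : Measure X) {A : Set X} {ε : ℝ} : Reach Γ m μ A ε Set.univ ∅ where
  measL := @MeasurableSet.univ X m
  measE := MeasurableSet.empty
  sub := Set.empty_subset _
  small := by simp
  decode := fun m' _ _ _ h => by simpa using h

/-- Removing from `L` a piece on which `A` is predicted, up to few errors, from the labels on the
rest of `L`: the errors are recorded in the new error set. -/
lemma Reach.step (hm : m ≤ mX) (hmeas : ∀ g : Γ, Measurable fun x : X => g • x) {A : Set X}
    (hA : MeasurableSet A) {ε : ℝ} {L E K : Set X} (h : Reach Γ m μ A ε L E)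
    (hK : MeasurableSet[m] K) (hKL : K ⊆ L) {φ : Set (Γ → Fin 3)} (hφ : MeasurableSet φ)
    (herr : μ.real (K ∩ (A ∆ (pattern Γ A (L \ K) ⁻¹' φ))) ≤ 4 * ε * μ.real K) :
    Reach Γ m μ A ε (L \ K) (E ∪ (K ∩ (A ∆ (pattern Γ A (L \ K) ⁻¹' φ)))) := by
  have hLm := hm _ h.measL
  have hKm := hm _ hK
  have hL' : MeasurableSet[m] (L \ K) := @MeasurableSet.diff X m _ _ h.measL hK
  have hL'm := hm _ hL'
  refine ⟨hL', h.measE.union (hKm.inter (hA.symmDiff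
    (measurable_pattern hmeas hL'm (hA.inter hL'm) hφ))), ?_, ?_, ?_⟩
  · rintro x (hx | hx) hx'
    · exact h.sub hx hx'.1
    · exact hx'.2 hx.1
  · have h1 := measureReal_union_le (μ := μ) E (K ∩ (A ∆ (pattern Γ A (L \ K) ⁻¹' φ)))
    have hdis : Disjoint Lᶜ K := Set.disjoint_left.2 fun x hx hxK => hx (hKL hxK)
    have h2 : μ.real (L \ K)ᶜ = μ.real Lᶜ + μ.real K := by
      have : (L \ K)ᶜ = Lᶜ ∪ K := by
        ext x
        simp only [Set.mem_compl_iff, Set.mem_sdiff, Set.mem_union]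
        tauto
      rw [this, measureReal_union hdis hKm]
    rw [h2]
    have := h.small
    linarith
  · have hLS := h.measL
    have hEL := h.sub
    have hdec := h.decode
    intro m' hmm' hinv hEnew hAL'
    have hLm' := hmm' _ hLS
    have hKm' := hmm' _ hK
    have hB : MeasurableSet[m'] (pattern Γ A (L \ K) ⁻¹' φ) :=
      @measurable_pattern Γ X _ _ m' A (L \ K) hinv (hmm' _ hL') hAL' φ hφ
    refine hdec m' hmm' hinv ?_ ?_
    · have : E = (E ∪ (K ∩ (A ∆ (pattern Γ A (L \ K) ⁻¹' φ)))) ∩ Lᶜ := by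
        ext x
        have h1 := @hEL x
        have h2 := @hKL x
        simp only [Set.mem_inter_iff, Set.mem_union, Set.mem_compl_iff] at *
        tauto
      rw [this]
      exact @MeasurableSet.inter X m' _ _ hEnew (@MeasurableSet.compl X _ m' hLm')
    · have : A ∩ L = (A ∩ (L \ K)) ∪ (K ∩ ((pattern Γ A (L \ K) ⁻¹' φ) ∆
          (E ∪ (K ∩ (A ∆ (pattern Γ A (L \ K) ⁻¹' φ)))))) := by
        ext x
        have h1 := @hEL x
        have h2 := @hKL x
        simp only [Set.mem_inter_iff, Set.mem_union, Set.mem_compl_iff, Set.mem_symmDiff,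
          Set.mem_sdiff] at *
        tauto
      rw [this]
      exact @MeasurableSet.union X m' _ _ hAL' (@MeasurableSet.inter X m' _ _ hKm'
        (@MeasurableSet.symmDiff X m' _ _ hB hEnew))

/-- Removing pieces greedily, one reaches pairs `(L, E)` with `L` arbitrarily small: otherwise the
decreasing sets `L` of the greedy procedure have a non-negligible limit `M`, and the step available
at `M` is available with the same gain at all late stages. -/
lemma exists_reach_lt (hm : m ≤ mX) (hmeas : ∀ g : Γ, Measurable fun x : X => g • x)
    (hmp : ∀ g : Γ, Measure.map (fun x : X => g • x) μ = μ) {A : Set X} (hA : MeasurableSet A)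
    {t : ℕ → Set X} (ht : ∀ n, MeasurableSet[m] (t n))
    (hsep : ∀ g : Γ, g ≠ 1 → ∀ᵐ x ∂μ, ∃ i, ¬ (g • x ∈ t i ↔ x ∈ t i))
    (hP : ∀ M : Set X, MeasurableSet M → ∀ η : ℝ, 0 < η →
      ∃ (F : Finset Γ) (φ : Set (Γ → Fin 3)), (1 : Γ) ∉ F ∧
      MeasurableSet φ ∧ LocalOn F φ ∧ μ.real ((M ∩ A) ∆ (pattern Γ A M ⁻¹' φ)) ≤ η)
    {ε : ℝ} (hε : 0 < ε) : ∃ L E, Reach Γ m μ A ε L E ∧ μ.real L < ε := by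
  by_contra! hbig
  let S := {p : Set X × Set X // Reach Γ m μ A ε p.1 p.2}
  let V : S → Set ℝ := fun p => {r | ∃ q : S, q.1.1 ⊆ p.1.1 ∧ μ.real q.1.1 = r}
  have hVbdd : ∀ p, BddBelow (V p) := fun p => ⟨0, by
    rintro r ⟨q, -, rfl⟩
    exact measureReal_nonneg⟩
  have hnext : ∀ (i : ℕ) (p : S), ∃ q : S, q.1.1 ⊆ p.1.1 ∧
      μ.real q.1.1 < sInf (V p) + 1 / ((i : ℝ) + 1) := by
    intro i p
    obtain ⟨r, ⟨q, hq, rfl⟩, hr⟩ := Real.lt_sInf_add_pos (s := V p)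
      ⟨_, p, subset_rfl, rfl⟩ (show 0 < 1 / ((i : ℝ) + 1) by positivity)
    exact ⟨q, hq, hr⟩
  choose next hnsub hnlt using hnext
  let s : ℕ → S := fun i => Nat.rec ⟨(Set.univ, ∅), Reach.univ μ⟩ next i
  have hs : ∀ i, s (i + 1) = next i (s i) := fun i => rfl
  have hanti : Antitone fun i => (s i).1.1 :=
    antitone_nat_of_succ_le fun i => by
      rw [hs]
      exact hnsub i (s i)
  let M : Set X := ⋂ i, (s i).1.1
  have hMm : MeasurableSet[m] M := @MeasurableSet.iInter X ℕ m _ _ fun i => (s i).2.measL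
  have hlim : Tendsto (fun i => μ.real (s i).1.1) atTop (nhds (μ.real M)) :=
    (ENNReal.tendsto_toReal (measure_ne_top _ _)).comp
      (tendsto_measure_iInter_atTop (fun i => (hm _ (s i).2.measL).nullMeasurableSet) hanti
        ⟨0, measure_ne_top _ _⟩)
  have hMε : ε ≤ μ.real M := ge_of_tendsto' hlim fun i => hbig _ _ (s i).2
  obtain ⟨κ, ρ, hκ, hρ, hstep⟩ := exists_step μ hmeas hmp hA hm ht hsep hε hMm hMε
    (hP M (hm _ hMm))
  have h1 : ∀ᶠ i in atTop, μ.real (s (i + 1)).1.1 < μ.real M + ρ :=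
    (hlim.comp (tendsto_add_atTop_nat 1)).eventually (gt_mem_nhds (by linarith))
  have h2 : ∀ᶠ i : ℕ in atTop, 1 / ((i : ℝ) + 1) < κ :=
    tendsto_one_div_add_atTop_nhds_zero_nat.eventually (gt_mem_nhds hκ)
  obtain ⟨i, hi1, hi2⟩ := (h1.and h2).exists
  have hML : M ⊆ (s (i + 1)).1.1 := Set.iInter_subset (fun i => (s i).1.1) (i + 1)
  obtain ⟨K, φ, hK, hKL, hκK, hφ, herr⟩ := hstep _ (s (i + 1)).2.measL hML (by
    rw [measureReal_sdiff hML (hm _ hMm)]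
    linarith)
  have hr := (s (i + 1)).2.step μ hm hmeas hA hK hKL hφ herr
  have h3 : sInf (V (s i)) ≤ μ.real ((s (i + 1)).1.1 \ K) :=
    csInf_le (hVbdd _) ⟨⟨(_, _), hr⟩, Set.sdiff_subset.trans (hanti (Nat.le_succ i)), rfl⟩
  rw [measureReal_sdiff hKL (hm _ hK)] at h3
  have h4 := hnlt i (s i)
  rw [← hs] at h4
  linarith

/-- A predictable set `A` is determined, relative to `m`, by a set of arbitrarily small measure. -/
lemma exists_small_code (hm : m ≤ mX) (hmeas : ∀ g : Γ, Measurable fun x : X => g • x)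
    (hmp : ∀ g : Γ, Measure.map (fun x : X => g • x) μ = μ) {A : Set X} (hA : MeasurableSet A)
    {t : ℕ → Set X} (ht : ∀ n, MeasurableSet[m] (t n))
    (hsep : ∀ g : Γ, g ≠ 1 → ∀ᵐ x ∂μ, ∃ i, ¬ (g • x ∈ t i ↔ x ∈ t i))
    (hP : ∀ M : Set X, MeasurableSet M → ∀ η : ℝ, 0 < η →
      ∃ (F : Finset Γ) (φ : Set (Γ → Fin 3)), (1 : Γ) ∉ F ∧
      MeasurableSet φ ∧ LocalOn F φ ∧ μ.real ((M ∩ A) ∆ (pattern Γ A M ⁻¹' φ)) ≤ η)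
    {u : ℝ} (hu : 0 < u) : ∃ E, MeasurableSet E ∧ μ.real E ≤ u ∧ ∀ m' : MeasurableSpace X,
      m ≤ m' → (∀ g : Γ, Measurable[m', m'] fun x : X => g • x) →
      MeasurableSet[m'] E → MeasurableSet[m'] A := by
  obtain ⟨L, E, h, hlt⟩ := exists_reach_lt μ hm hmeas hmp hA ht hsep hP
    (show 0 < u / 5 by positivity)
  refine ⟨E ∪ (A ∩ L), h.measE.union (hA.inter (hm _ h.measL)), ?_, ?_⟩
  · have h1 := measureReal_union_le (μ := μ) E (A ∩ L)
    have h2 : μ.real (A ∩ L) ≤ μ.real L := measureReal_mono Set.inter_subset_right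
    have h3 := h.small
    have h4 : μ.real Lᶜ ≤ 1 := measureReal_le_one
    nlinarith
  · have hLS := h.measL
    have hEL := h.sub
    have hdec := h.decode
    intro m' hmm' hinv hE
    have hL := hmm' _ hLS
    refine hdec m' hmm' hinv ?_ ?_
    · have : E = (E ∪ (A ∩ L)) ∩ Lᶜ := by
        ext x
        have h1 := @hEL x
        simp only [Set.mem_inter_iff, Set.mem_union, Set.mem_compl_iff] at *
        tauto
      rw [this]
      exact @MeasurableSet.inter X m' _ _ hE (@MeasurableSet.compl X _ m' hL)
    · have : A ∩ L = (E ∪ (A ∩ L)) ∩ L := by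
        ext x
        have h1 := @hEL x
        simp only [Set.mem_inter_iff, Set.mem_union, Set.mem_compl_iff] at *
        tauto
      rw [this]
      exact @MeasurableSet.inter X m' _ _ hE hL

end Coding

/-! ### Finite and infinite groups -/

section Assembly

variable {Γ X : Type*} [Group Γ] [mX : MeasurableSpace X] [MulAction Γ X]

lemma isPartition_labPart {X : Type*} (A L : Set X) : IsPartition (labPart A L) :=
  fun x => ⟨lab A L x, rfl, fun _ h => h.symm⟩

lemma hasFiniteShannonEntropy_labPart (μ : Measure X) (A L : Set X) :
    HasFiniteShannonEntropy μ (labPart A L) := by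
  refine summable_of_ne_finset_zero (s := Finset.range 3) fun n hn => ?_
  have : labPart A L n = ∅ := by
    refine Set.eq_empty_of_forall_notMem fun x hx => hn (Finset.mem_range.2 ?_)
    rw [← show (lab A L x : ℕ) = n from hx]
    exact (lab A L x).2
  simp [this]

lemma measurableSet_labPart {A L : Set X} (hA : MeasurableSet A) (hL : MeasurableSet L) (n : ℕ) :
    MeasurableSet (labPart A L n) :=
  measurable_lab hL (hA.inter hL) (MeasurableSet.of_discrete (s := {c : Fin 3 | (c : ℕ) = n}))

/-- In a finite group every order has a maximal element, so by invariance `1` is maximal with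
positive probability. -/
lemma measure_maximal_ne_zero [Finite Γ] (ν : Measure (Γ × Γ → Bool)) (hν : IsInvRandomOrder ν) :
    ν {R | ∀ γ : Γ, R (1, γ) = false} ≠ 0 := by
  intro h0
  obtain ⟨-, h1, hinv⟩ := hν
  have hact : ∀ g : Γ, Measurable (relAct g) := fun g =>
    measurable_pi_lambda _ fun p => measurable_pi_apply _
  have hg : ∀ g : Γ, ν {R | ∀ γ : Γ, R (g, γ) = false} = 0 := by
    intro g
    have h2 : {R : Γ × Γ → Bool | ∀ γ : Γ, R (g, γ) = false} ⊆
        relAct g ⁻¹' {R | ∀ γ : Γ, R (1, γ) = false} := by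
      intro R hR γ
      simpa [relAct] using hR (γ * g)
    refine measure_mono_null h2 (le_antisymm ?_ zero_le)
    refine (Measure.le_map_apply (hact g).aemeasurable _).trans ?_
    rw [hinv g, h0]
  have hsub : ordSet Γ ⊆ ⋃ g : Γ, {R | ∀ γ : Γ, R (g, γ) = false} := by
    rintro R ⟨hasymm, htrans⟩
    let r : Γ → Γ → Prop := fun x y => R (y, x) = true
    have : IsTrans Γ r := ⟨fun x y z hxy hyz => htrans _ _ _ hyz hxy⟩
    have : Std.Irrefl r := ⟨fun x hx => by
      have := hasymm x x hx
      exact Bool.false_ne_true (this.symm.trans hx)⟩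
    have hwf : WellFounded r := Finite.wellFounded_of_trans_of_irrefl r
    obtain ⟨g, -, hmin⟩ := hwf.has_min Set.univ ⟨1, trivial⟩
    refine Set.mem_iUnion.2 ⟨g, fun γ => ?_⟩
    have := hmin γ trivial
    simpa [r] using this
  have := measure_mono_null hsub (measure_iUnion_null hg)
  rw [h1] at this
  exact one_ne_zero this

/-- For finite `Γ` the past of `1` is empty with positive probability, so predictability makes
every measurable set trivial and the one-piece partition generating. -/
lemma rokhlinEntropy_eq_zero_of_finite [Finite Γ] (μ : Measure X) [IsProbabilityMeasure μ]
    (ν : Measure (Γ × Γ → Bool)) (hν : IsInvRandomOrder ν)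
    (hpred : ∀ A : ℕ → Set X, IsPartition A → (∀ n, MeasurableSet (A n)) →
      HasFiniteShannonEntropy μ A →
      ∀ᵐ R ∂ν, ∀ n : ℕ, ∃ B : Set X,
        MeasurableSet[partSigma A {γ : Γ | R (1, γ) = true}] B ∧ μ (A n ∆ B) = 0) :
    rokhlinEntropy Γ μ = 0 := by
  let P : ℕ → Set X := fun n => if n = 0 then Set.univ else ∅
  have hP : ∑' n, ENNReal.ofReal (Real.negMulLog (μ (P n)).toReal) = 0 := by
    refine ENNReal.tsum_eq_zero.2 fun n => ?_
    by_cases h : n = 0 <;> simp [P, h]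
  refine le_antisymm ?_ zero_le
  rw [← hP]
  refine iInf₂_le P ⟨fun x => ⟨0, by simp [P], fun n hn => ?_⟩, fun n => ?_, fun s hs => ?_⟩
  · by_contra h
    simp [P, h] at hn
  · by_cases h : n = 0 <;> simp [P, h]
  · have hae := hpred _ (isPartition_labPart s Set.univ)
      (measurableSet_labPart hs MeasurableSet.univ) (hasFiniteShannonEntropy_labPart μ _ _)
    obtain ⟨R, hR, hR2⟩ : ∃ R : Γ × Γ → Bool, (∀ γ : Γ, R (1, γ) = false) ∧ ∀ n : ℕ, ∃ B : Set X,
        MeasurableSet[partSigma (labPart s Set.univ) {γ : Γ | R (1, γ) = true}] B ∧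
          μ (labPart s Set.univ n ∆ B) = 0 := by
      by_contra! h
      refine measure_maximal_ne_zero ν hν (measure_mono_null ?_ hae)
      intro R hR hR2
      obtain ⟨n, hn⟩ := h R hR
      obtain ⟨B, hB, hB2⟩ := hR2 n
      exact hn B hB hB2
    obtain ⟨B, hB, hB2⟩ := hR2 1
    rw [labPart_one, Set.univ_inter] at hB2
    refine ⟨B, ?_, hB2⟩
    have hbot : partSigma (labPart s Set.univ) {γ : Γ | R (1, γ) = true} = ⊥ := by
      rw [← MeasurableSpace.generateFrom_empty, partSigma]
      congr 1
      refine Set.eq_empty_of_forall_notMem ?_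
      rintro S ⟨g, hg, -⟩
      exact Bool.false_ne_true ((hR g).symm.trans hg)
    rw [hbot, MeasurableSpace.measurableSet_bot_iff] at hB
    rcases hB with rfl | rfl
    · exact @MeasurableSet.empty X (partSigma P (Set.univ : Set Γ))
    · exact @MeasurableSet.univ X (partSigma P (Set.univ : Set Γ))

/-- Predictability of the label partition: `M ∩ A` is approximated by a set read off from finitely
many labels at positions different from `1`. -/
lemma exists_local_predictor (hmeas : ∀ g : Γ, Measurable fun x : X => g • x)
    (μ : Measure X) [IsProbabilityMeasure μ]
    (ν : Measure (Γ × Γ → Bool)) (hν : IsInvRandomOrder ν)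
    (hpred : ∀ A : ℕ → Set X, IsPartition A → (∀ n, MeasurableSet (A n)) →
      HasFiniteShannonEntropy μ A →
      ∀ᵐ R ∂ν, ∀ n : ℕ, ∃ B : Set X,
        MeasurableSet[partSigma A {γ : Γ | R (1, γ) = true}] B ∧ μ (A n ∆ B) = 0)
    {A M : Set X} (hA : MeasurableSet A) (hM : MeasurableSet M) {η : ℝ} (hη : 0 < η) :
    ∃ (F : Finset Γ) (φ : Set (Γ → Fin 3)), (1 : Γ) ∉ F ∧
      MeasurableSet φ ∧ LocalOn F φ ∧ μ.real ((M ∩ A) ∆ (pattern Γ A M ⁻¹' φ)) ≤ η := by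
  have hae := hpred _ (isPartition_labPart A M) (measurableSet_labPart hA hM)
    (hasFiniteShannonEntropy_labPart μ _ _)
  obtain ⟨R, hR, B, hB, hB2⟩ : ∃ R ∈ ordSet Γ, ∃ B : Set X,
      MeasurableSet[partSigma (labPart A M) {γ : Γ | R (1, γ) = true}] B ∧
        μ (labPart A M 1 ∆ B) = 0 := by
    by_contra! h
    have h0 : ν (ordSet Γ) = 0 := by
      refine measure_mono_null ?_ hae
      intro R hR hR2
      obtain ⟨B, hB, hB2⟩ := hR2 1
      exact h R hR B hB hB2
    rw [hν.2.1] at h0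
    exact one_ne_zero h0
  have h1 : (1 : Γ) ∉ {γ : Γ | R (1, γ) = true} := fun h =>
    Bool.false_ne_true ((hR.1 1 1 h).symm.trans h)
  obtain ⟨F, φ, hF, hφ, hloc, hle⟩ := exists_pattern_approx μ hmeas hA hM h1 hB hη
  refine ⟨F, φ, hF, hφ, hloc, ?_⟩
  rw [labPart_one] at hB2
  have h2 : μ.real ((M ∩ A) ∆ (pattern Γ A M ⁻¹' φ)) ≤
      μ.real ((M ∩ A) ∆ B) + μ.real (B ∆ (pattern Γ A M ⁻¹' φ)) := by
    refine (measureReal_mono ?_).trans (measureReal_union_le _ _)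
    exact symmDiff_triangle _ _ _
  have h3 : μ.real ((M ∩ A) ∆ B) = 0 := by simp [Measure.real, hB2]
  linarith

lemma measurable_smul_partSigma {Γ X : Type*} [Group Γ] [MulAction Γ X] (D : ℕ → Set X) (g : Γ) :
    Measurable[partSigma D (Set.univ : Set Γ), partSigma D (Set.univ : Set Γ)]
      fun x : X => g • x := by
  refine @measurable_generateFrom _ _ (partSigma D (Set.univ : Set Γ)) _ _ ?_
  rintro s ⟨h, -, i, rfl⟩
  refine MeasurableSpace.measurableSet_generateFrom ⟨h * g, trivial, i, ?_⟩
  ext x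
  simp [smul_smul]

lemma measurableSet_partSigma {Γ X : Type*} [Group Γ] [MulAction Γ X] (D : ℕ → Set X) (n : ℕ) :
    MeasurableSet[partSigma D (Set.univ : Set Γ)] (D n) :=
  MeasurableSpace.measurableSet_generateFrom ⟨1, trivial, n, by simp⟩

/-- The sets of a free factor and the codes of a generating sequence of sets are all as small as
one likes, so they fit into one partition of entropy at most `δ`, which generates. -/
lemma rokhlinEntropy_le_of_infinite [Infinite Γ] [Countable Γ] [StandardBorelSpace X]
    (μ : Measure X) [IsProbabilityMeasure μ]
    (hmeas : ∀ g : Γ, Measurable fun x : X => g • x)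
    (hmp : ∀ g : Γ, Measure.map (fun x : X => g • x) μ = μ)
    (hfree : ∀ g : Γ, g ≠ 1 → ∀ᵐ x ∂μ, g • x ≠ x)
    (hergodic : ∀ s : Set X, MeasurableSet s → (∀ g : Γ, (fun x => g • x) ⁻¹' s = s) →
      μ s = 0 ∨ μ s = 1)
    (hP : ∀ A : Set X, MeasurableSet A → ∀ M : Set X, MeasurableSet M → ∀ η : ℝ, 0 < η →
      ∃ (F : Finset Γ) (φ : Set (Γ → Fin 3)), (1 : Γ) ∉ F ∧
      MeasurableSet φ ∧ LocalOn F φ ∧ μ.real ((M ∩ A) ∆ (pattern Γ A M ⁻¹' φ)) ≤ η)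
    {δ : ℝ} (hδ : 0 < δ) : rokhlinEntropy Γ μ ≤ ENNReal.ofReal δ := by
  obtain ⟨u, hu, hpart⟩ := exists_smallPartition μ hδ
  obtain ⟨D, hD, hDu, hDsep⟩ := exists_free_factor μ hmeas hmp hfree hergodic
    (fun n => hu (2 * n))
  -- the sets `D n` generate a free factor; they become the even-indexed sets of the family to be
  -- encoded, and the codes `E k` of a generating sequence of sets become the odd-indexed ones
  have hm : partSigma D (Set.univ : Set Γ) ≤ mX := by
    refine MeasurableSpace.generateFrom_le ?_
    rintro s ⟨g, -, i, rfl⟩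
    exact hmeas g (hD i)
  obtain ⟨e, he⟩ := exists_surjective_nat (Γ × ℕ)
  let t : ℕ → Set X := fun i => (fun x => (e i).1 • x) ⁻¹' D (e i).2
  have ht : ∀ i, MeasurableSet[partSigma D (Set.univ : Set Γ)] (t i) := fun i =>
    measurable_smul_partSigma D (e i).1 (measurableSet_partSigma D _)
  have hsep : ∀ g : Γ, g ≠ 1 → ∀ᵐ x ∂μ, ∃ i, ¬ (g • x ∈ t i ↔ x ∈ t i) := by
    intro g hg
    filter_upwards [hDsep g hg] with x ⟨h, n, hx⟩
    obtain ⟨i, hi⟩ := he (h, n)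
    exact ⟨i, by simpa [t, hi] using hx⟩
  let G : ℕ → Set X := MeasurableSpace.natGeneratingSequence X
  have hG : ∀ k, MeasurableSet (G k) := MeasurableSpace.measurableSet_natGeneratingSequence
  have hgen : MeasurableSpace.generateFrom (Set.range G) = mX :=
    MeasurableSpace.generateFrom_natGeneratingSequence X
  choose E hE hEu hEdec using fun k => exists_small_code μ hm hmeas hmp (hG k) ht hsep
    (hP _ (hG k)) (hu (2 * k + 1))
  let D' : ℕ → Set X := fun n => if n % 2 = 0 then D (n / 2) else E (n / 2)
  have hD'even : ∀ n, D' (2 * n) = D n := fun n => by simp [D']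
  have hD'odd : ∀ n, D' (2 * n + 1) = E n := fun n => by
    have h1 : (2 * n + 1) % 2 = 1 := by omega
    have h2 : (2 * n + 1) / 2 = n := by omega
    simp only [D', h1, h2]
    simp
  have hcases : ∀ n, (∃ k, n = 2 * k) ∨ ∃ k, n = 2 * k + 1 := fun n => by
    rcases Nat.even_or_odd' n with ⟨k, hk | hk⟩
    exacts [Or.inl ⟨k, hk⟩, Or.inr ⟨k, hk⟩]
  obtain ⟨P, hPpart, hPm, hPent, hPD⟩ := hpart D'
    (fun n => by
      rcases hcases n with ⟨k, rfl⟩ | ⟨k, rfl⟩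
      · rw [hD'even]; exact hD k
      · rw [hD'odd]; exact hE k)
    (fun n => by
      rcases hcases n with ⟨k, rfl⟩ | ⟨k, rfl⟩
      · rw [hD'even]; exact hDu k
      · rw [hD'odd]; exact hEu k)
  refine (iInf₂_le P ⟨hPpart, hPm, ?_⟩).trans hPent
  -- the sets that agree almost everywhere with a set generated by `P`
  let m' : MeasurableSpace X := eventuallyMeasurableSpace (partSigma P (Set.univ : Set Γ)) (ae μ)
  have hinv : ∀ g : Γ, Measurable[m', m'] fun x : X => g • x := by
    rintro g s ⟨B, hB, hsB⟩
    refine ⟨_, measurable_smul_partSigma P g hB, ?_⟩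
    have hq : Measure.QuasiMeasurePreserving (fun x : X => g • x) μ μ :=
      ⟨hmeas g, (hmp g).le.absolutelyContinuous⟩
    exact hq.preimage_ae_eq hsB
  have hD'm : ∀ n, MeasurableSet[m'] (D' n) := by
    intro n
    obtain ⟨T, hT⟩ := hPD n
    refine ⟨_, ?_, hT⟩
    exact @MeasurableSet.biUnion X ℕ (partSigma P (Set.univ : Set Γ)) _ _ T.to_countable
      fun k _ => measurableSet_partSigma P k
  have hmm' : partSigma D (Set.univ : Set Γ) ≤ m' := by
    refine MeasurableSpace.generateFrom_le ?_
    rintro s ⟨g, -, i, rfl⟩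
    refine hinv g ?_
    rw [← hD'even]
    exact hD'm _
  have hGm : ∀ k, MeasurableSet[m'] (G k) := fun k => by
    refine hEdec k m' hmm' hinv ?_
    rw [← hD'odd]
    exact hD'm _
  have hle : mX ≤ m' := by
    rw [← hgen]
    refine MeasurableSpace.generateFrom_le ?_
    rintro _ ⟨k, rfl⟩
    exact hGm k
  intro s hs
  obtain ⟨B, hB, hsB⟩ := hle _ hs
  exact ⟨B, hB, measure_symmDiff_eq_zero_iff.2 hsB⟩

end Assembly

/-- **Predictable free ergodic actions have zero Rokhlin entropy.**
A free ergodic p.m.p. action of a countable group which is measure-theoretically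
predictable with respect to some invariant random partial order has zero Rokhlin entropy. -/
theorem predictable_zero_rokhlin_entropy
    {Γ X : Type*} [Group Γ] [Countable Γ] [mX : MeasurableSpace X] [StandardBorelSpace X]
    [MulAction Γ X]
    (μ : Measure X) [IsProbabilityMeasure μ]
    (hmeas : ∀ g : Γ, Measurable fun x : X => g • x)
    (hmp : ∀ g : Γ, Measure.map (fun x : X => g • x) μ = μ)
    (hfree : ∀ g : Γ, g ≠ 1 → ∀ᵐ x ∂μ, g • x ≠ x)
    (hergodic : ∀ s : Set X, MeasurableSet s → (∀ g : Γ, (fun x => g • x) ⁻¹' s = s) →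
      μ s = 0 ∨ μ s = 1)
    (ν : Measure (Γ × Γ → Bool)) (hν : IsInvRandomOrder ν)
    (hpred : ∀ A : ℕ → Set X, IsPartition A → (∀ n, MeasurableSet (A n)) →
      HasFiniteShannonEntropy μ A →
      ∀ᵐ R ∂ν, ∀ n : ℕ, ∃ B : Set X,
        MeasurableSet[partSigma A {γ : Γ | R (1, γ) = true}] B ∧ μ (A n ∆ B) = 0) :
    rokhlinEntropy Γ μ = 0 := by
  rcases finite_or_infinite Γ with hfin | hinf
  · exact rokhlinEntropy_eq_zero_of_finite μ ν hν hpred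
  · refine le_antisymm (ENNReal.le_of_forall_pos_le_add fun δ hδ _ => ?_) zero_le
    rw [zero_add]
    have h := rokhlinEntropy_le_of_infinite μ hmeas hmp hfree hergodic
      (fun A hA M hM η hη => exists_local_predictor hmeas μ ν hν hpred hA hM hη)
      (NNReal.coe_pos.2 hδ)
    rwa [ENNReal.ofReal_coe_nnreal] at h
end

section
/- Let Γ be a countable infinite amenable group acting by homeomorphisms on compact metric spaces X and Y, and suppose π : X → Y is a topologically prime extension (a continuous Γ-equivariant surjection with no intermediate factors). Then the topological entropies coincide: h_Γ(X) = h_Γ(Y). -/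
/-!
Entropy does not increase under `π` because a cover of `Y` pulls back to `X`. For the converse,
let `E i` be maximal `(F i, c)`-separated subsets of `X`; their cardinalities bound the cover
numbers of a given cover of `X` (`exists_sep`, `exists_lebesgue`). Fix `δ > 0` and split `E i`
into `coverNum (coverJoin (F i) V)` classes, for a cover `V` of `Y` by `δ / 2`-balls, so that the
orbits of points of one class have `δ`-close images in `Y` along `F i`. It is enough that each
class has at most `exp (ε |F i|)` points. Let `M ⊆ X` be the set of points in nontrivial fibres.

If `M` is finite, two points of a class can only be apart at times when they are near `M`, and
near `M` the orbit of a point follows that of a point of `M` for a long time. As `Γ` is infinite,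
few records of elements of `M` determine a point of the class (`sep_bound_of_finite`).

If `M` is infinite and the bound fails, fix an ultrafilter on the indices `i` for which it fails.
Among many disjoint open sets, one is visited rarely by the points of `E i` along `F i`, for
almost all `i` (`exists_few_visits`). Since `M` is infinite this gives a continuous bump `ψ₀`,
non-constant on a fibre of `π`, with rarely visited support. Composing `ψ₀` with finer and finer
staircases whose rises are, by the same argument, placed at rarely visited values, one obtains in
the limit a continuous `ψ`, still non-constant on a fibre, whose values can at any resolution be
encoded along the orbits at arbitrarily small average cost (`exists_cheap_code`). Primeness,
applied to the algebra of functions that take equal values at points with the same `π`-image and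
the same `ψ`-values along the orbit, shows that `π` and the translates of `ψ` separate points of `X`
(`separates_of_prime`). By compactness finitely many translates suffice for the separation of
points `c` apart (`exists_uniform`), so a point of a class is determined by the codes of `ψ` along
`K * F i`, with `K` finite. Counting code words by weight (`card_sep_le`) bounds the class.
-/

open Filter MeasureTheory
open scoped ENNReal

/-- A Følner sequence for a countable group `Γ`. -/
def IsFolner {Γ : Type*} [Group Γ] (F : ℕ → Finset Γ) : Prop :=
  (∀ i, (F i).Nonempty) ∧
    ∀ g : Γ, Tendsto (fun i => ((((fun h => g * h) '' ↑(F i) \ (↑(F i) : Set Γ)).ncard : ℝ) / (F i).card))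
      atTop (nhds 0)

/-- An open cover of a topological space. -/
def IsOpenCover {X : Type*} [TopologicalSpace X] (U : Set (Set X)) : Prop :=
  (∀ u ∈ U, IsOpen u) ∧ ⋃₀ U = Set.univ

/-- Minimal cardinality of a finite subcover of a cover. -/
noncomputable def coverNum {X : Type*} (U : Set (Set X)) : ℕ :=
  sInf {n | ∃ V : Finset (Set X), ↑V ⊆ U ∧ ⋃₀ (V : Set (Set X)) = Set.univ ∧ V.card = n}

/-- The join `⋁_{g ∈ F} g⁻¹ 𝒰` of an open cover along a finite subset of the acting group. -/
def coverJoin {Γ X : Type*} [Group Γ] [MulAction Γ X] (F : Finset Γ) (U : Set (Set X)) :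
    Set (Set X) :=
  {v | ∃ u : Γ → Set X, (∀ g ∈ F, u g ∈ U) ∧ v = ⋂ g ∈ F, (fun x => g • x) ⁻¹' u g}

/-- Topological entropy of the action `Γ ↷ X` computed along the Følner sequence `F`. -/
noncomputable def topEnt (Γ X : Type*) [Group Γ] [TopologicalSpace X] [MulAction Γ X]
    (F : ℕ → Finset Γ) : ℝ≥0∞ :=
  ⨆ (U : Set (Set X)) (_ : IsOpenCover U),
    Filter.limsup
      (fun i => ENNReal.ofReal (Real.log (coverNum (coverJoin (F i) U)) / (F i).card)) atTop

/-! ### Covers and separated sets -/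

lemma coverJoin_isOpenCover {Γ X : Type*} [Group Γ] [TopologicalSpace X] [MulAction Γ X]
    (hc : ∀ g : Γ, Continuous fun x : X => g • x) (F : Finset Γ) {U : Set (Set X)}
    (hU : IsOpenCover U) : IsOpenCover (coverJoin F U) := by
  constructor
  · rintro v ⟨u, hu, rfl⟩
    exact isOpen_biInter_finset fun g hg => (hU.1 _ (hu g hg)).preimage (hc g)
  · refine Set.eq_univ_of_forall fun x => ?_
    have h : ∀ g : Γ, ∃ u ∈ U, g • x ∈ u := fun g => by
      have := Set.mem_univ (g • x)
      rwa [← hU.2] at this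
    choose u hu hx using h
    exact ⟨_, ⟨u, fun g _ => hu g, rfl⟩, by simp [hx]⟩

lemma exists_coverNum {X : Type*} [TopologicalSpace X] [CompactSpace X] {U : Set (Set X)}
    (hU : IsOpenCover U) : ∃ V : Finset (Set X), ↑V ⊆ U ∧ ⋃₀ (V : Set (Set X)) = Set.univ ∧
      V.card = coverNum U := by
  have hne : {n | ∃ V : Finset (Set X), ↑V ⊆ U ∧ ⋃₀ (V : Set (Set X)) = Set.univ ∧
      V.card = n}.Nonempty := by
    obtain ⟨T, hTU, hTf, hT⟩ := isCompact_univ.elim_finite_subcover_image (b := U) (c := id)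
      hU.1 (by rw [← hU.2, Set.sUnion_eq_biUnion]; rfl)
    refine ⟨_, hTf.toFinset, by simpa using hTU, ?_, rfl⟩
    rw [hTf.coe_toFinset, Set.sUnion_eq_biUnion]
    exact Set.univ_subset_iff.1 hT
  exact Nat.sInf_mem hne

lemma coverNum_le {X : Type*} {U : Set (Set X)} (V : Finset (Set X)) (hV : ↑V ⊆ U)
    (hV' : ⋃₀ (V : Set (Set X)) = Set.univ) : coverNum U ≤ V.card :=
  Nat.sInf_le ⟨V, hV, hV', rfl⟩

/-- A finite set `E` is `(F, c)`-separated: distinct points of `E` are at distance at least `c`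
after translation by some `g ∈ F`. -/
def IsSep {Γ X : Type*} [Group Γ] [MetricSpace X] [MulAction Γ X] (F : Finset Γ) (c : ℝ)
    (E : Finset X) : Prop :=
  ∀ x ∈ E, ∀ y ∈ E, (∀ g ∈ F, dist (g • x) (g • y) < c) → x = y

/-- A separated set of maximal cardinality exists, and maximality makes it spanning. -/
lemma exists_sep {Γ X : Type*} [Group Γ] [MetricSpace X] [CompactSpace X] [MulAction Γ X]
    (hc : ∀ g : Γ, Continuous fun x : X => g • x) (F : Finset Γ) {c : ℝ} (hc0 : 0 < c) :
    ∃ E : Finset X, IsSep F c E ∧ ∀ x, ∃ e ∈ E, ∀ g ∈ F, dist (g • x) (g • e) < c := by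
  classical
  -- a finite cover by sets of small dynamical diameter bounds the size of separated sets
  obtain ⟨t, ht⟩ := CompactSpace.elim_nhds_subcover
    (fun x : X => ⋂ g ∈ F, (fun z : X => g • z) ⁻¹' Metric.ball (g • x) (c / 2))
    (fun x => by
      refine (Filter.biInter_finset_mem F).2 fun g _ => ?_
      exact (hc g).continuousAt.preimage_mem_nhds (Metric.ball_mem_nhds _ (by positivity)))
  have hcov : ∀ x : X, ∃ a ∈ t, ∀ g ∈ F, dist (g • x) (g • a) < c / 2 := by
    intro x
    have : x ∈ (⊤ : Set X) := trivial
    rw [← ht] at this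
    simpa using this
  choose a hat ha using hcov
  have hbd : ∀ E : Finset X, IsSep F c E → E.card ≤ t.card := by
    intro E hE
    refine Finset.card_le_card_of_injOn a (fun x _ => hat x) ?_
    intro x hx x' hx' hxx
    refine hE x hx x' hx' fun g hg => ?_
    have h1 := ha x g hg
    have h2 := ha x' g hg
    rw [← hxx] at h2
    have := dist_triangle_right (g • x) (g • x') (g • a x)
    linarith
  have hex : ∃ n, ∃ E : Finset X, IsSep F c E ∧ E.card = n := ⟨0, ∅, by simp [IsSep], rfl⟩
  obtain ⟨E, hE, hEc⟩ := Nat.findGreatest_spec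
    (P := fun n => ∃ E : Finset X, IsSep F c E ∧ E.card = n) (Nat.zero_le t.card)
    ⟨∅, by simp [IsSep], rfl⟩
  refine ⟨E, hE, fun x => ?_⟩
  by_contra! hx
  have hxE : x ∉ E := fun h => by
    obtain ⟨g, _, h'⟩ := hx x h
    simp at h'
    linarith
  have hins : IsSep F c (insert x E) := by
    intro y hy z hz hyz
    rw [Finset.mem_insert] at hy hz
    rcases hy with rfl | hy <;> rcases hz with rfl | hz
    · rfl
    · obtain ⟨g, hg, h'⟩ := hx z hz
      exact absurd (hyz g hg) (not_lt.2 h')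
    · obtain ⟨g, hg, h'⟩ := hx y hy
      exact absurd (hyz g hg) (not_lt.2 (by rwa [dist_comm]))
    · exact hE y hy z hz hyz
  have h1 := Nat.le_findGreatest
    (P := fun n => ∃ E : Finset X, IsSep F c E ∧ E.card = n) (hbd _ hins) ⟨_, hins, rfl⟩
  rw [Finset.card_insert_of_notMem hxE] at h1
  omega

/-- With `c` a Lebesgue number of `U`, an `(F, c)`-spanning set bounds the cover number of the
join of `U` along `F`. -/
lemma exists_lebesgue {Γ X : Type*} [Group Γ] [MetricSpace X] [CompactSpace X] [MulAction Γ X]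
    {U : Set (Set X)} (hU : IsOpenCover U) :
    ∃ c : ℝ, 0 < c ∧ ∀ (F : Finset Γ) (E : Finset X),
      (∀ x, ∃ e ∈ E, ∀ g ∈ F, dist (g • x) (g • e) < c) →
      coverNum (coverJoin F U) ≤ E.card := by
  classical
  obtain ⟨c, hc, h⟩ := lebesgue_number_lemma_of_metric_sUnion isCompact_univ hU.1 hU.2.ge
  refine ⟨c, hc, fun F E hE => ?_⟩
  choose u hu hbu using fun x => h x (Set.mem_univ x)
  refine le_trans (coverNum_le (E.image fun e => ⋂ g ∈ F, (fun x => g • x) ⁻¹' u (g • e)) ?_ ?_)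
    Finset.card_image_le
  · intro v hv
    simp only [Finset.coe_image, Set.mem_image] at hv
    obtain ⟨e, _, rfl⟩ := hv
    exact ⟨fun g => u (g • e), fun g _ => hu _, rfl⟩
  · refine Set.eq_univ_of_forall fun x => ?_
    obtain ⟨e, he, hxe⟩ := hE x
    refine ⟨_, Finset.mem_coe.2 (Finset.mem_image_of_mem _ he), ?_⟩
    simp only [Set.mem_iInter, Set.mem_preimage]
    exact fun g hg => hbu _ (hxe g hg)

/-- For a suitable cover `V` of `Y`, the points of `X` split into `coverNum (coverJoin F V)`
classes, and `F`-translates of points of a common class have `δ`-close images in `Y`. -/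
lemma exists_classes {Γ X Y : Type*} [Group Γ] [MulAction Γ X]
    [MetricSpace Y] [CompactSpace Y] [MulAction Γ Y]
    (hcY : ∀ g : Γ, Continuous fun y : Y => g • y)
    (π : X → Y) (hπeq : ∀ (g : Γ) (x : X), π (g • x) = g • π x) {δ : ℝ} (hδ : 0 < δ) :
    ∃ V : Set (Set Y), IsOpenCover V ∧ ∀ F : Finset Γ, ∃ (P : X → Set Y) (Q : Finset (Set Y)),
      (∀ x, P x ∈ Q) ∧ Q.card = coverNum (coverJoin F V) ∧
      ∀ x x', P x = P x' → ∀ g ∈ F, dist (π (g • x)) (π (g • x')) < δ := by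
  have hV : IsOpenCover (Set.range fun y : Y => Metric.ball y (δ / 2)) := by
    constructor
    · rintro _ ⟨y, rfl⟩
      exact Metric.isOpen_ball
    · exact Set.eq_univ_of_forall fun y => ⟨_, ⟨y, rfl⟩, Metric.mem_ball_self (by positivity)⟩
  refine ⟨_, hV, fun F => ?_⟩
  obtain ⟨Q, hQ, hQc, hcard⟩ := exists_coverNum (coverJoin_isOpenCover hcY F hV)
  have h : ∀ x, ∃ q ∈ Q, π x ∈ q := fun x => by
    have := Set.mem_univ (π x)
    rw [← hQc] at this
    simpa using this
  choose P hP hxP using h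
  refine ⟨P, Q, hP, hcard, fun x x' hxx g hg => ?_⟩
  obtain ⟨u, hu, hPu⟩ := hQ (hP x)
  have h1 := hxP x
  have h2 := hxP x'
  rw [← hxx] at h2
  rw [hPu] at h1 h2
  simp only [Set.mem_iInter, Set.mem_preimage] at h1 h2
  have h1 := h1 g hg
  have h2 := h2 g hg
  obtain ⟨y, hy⟩ := hu g hg
  rw [← hy, ← hπeq, Metric.mem_ball] at h1 h2
  have := dist_triangle_right (π (g • x)) (π (g • x')) y
  linarith

/-- Compactness: if `π` together with the functions `x ↦ ψ (g • x)` separates the two points of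
each pair in a closed set `Z`, it does so with finitely many `g` and uniform tolerances. -/
lemma exists_uniform {Γ X Y : Type*} [Group Γ] [MetricSpace X] [CompactSpace X] [MulAction Γ X]
    [MetricSpace Y] (hcX : ∀ g : Γ, Continuous fun x : X => g • x)
    (π : X → Y) (hπc : Continuous π) (ψ : C(X, ℝ)) {Z : Set (X × X)} (hZ : IsClosed Z)
    (h : ∀ p ∈ Z, π p.1 = π p.2 → (∀ g : Γ, ψ (g • p.1) = ψ (g • p.2)) → False) :
    ∃ (K : Finset Γ) (δ : ℝ), 0 < δ ∧ ∀ p ∈ Z, dist (π p.1) (π p.2) < δ →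
      (∀ g ∈ K, dist (ψ (g • p.1)) (ψ (g • p.2)) < δ) → False := by
  classical
  obtain ⟨u, hu⟩ := hZ.isCompact.elim_finite_subfamily_closed
    (fun i : Γ × ℕ => {p : X × X | dist (ψ (i.1 • p.1)) (ψ (i.1 • p.2)) ≤ 1 / ((i.2 : ℝ) + 1) ∧
      dist (π p.1) (π p.2) ≤ 1 / ((i.2 : ℝ) + 1)})
    (fun i => by
      have h1 := (hcX i.1)
      have h2 : Continuous fun p : X × X => dist (ψ (i.1 • p.1)) (ψ (i.1 • p.2)) :=
        ((ψ.continuous.comp (h1.comp continuous_fst))).dist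
          (ψ.continuous.comp (h1.comp continuous_snd))
      have h3 : Continuous fun p : X × X => dist (π p.1) (π p.2) := by fun_prop
      exact (isClosed_le h2 continuous_const).inter (isClosed_le h3 continuous_const))
    (by
      refine Set.eq_empty_of_forall_notMem ?_
      rintro p ⟨hpZ, hp⟩
      simp only [Set.mem_iInter] at hp
      have aux : ∀ a : ℝ, (∀ n : ℕ, a ≤ 1 / ((n : ℝ) + 1)) → a ≤ 0 := fun a ha =>
        ge_of_tendsto' tendsto_one_div_add_atTop_nhds_zero_nat ha
      refine h p hpZ ?_ ?_
      · exact dist_le_zero.1 (aux _ fun n => (hp (1, n)).2)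
      · exact fun g => dist_le_zero.1 (aux _ fun n => (hp (g, n)).1))
  have hpos : ∀ n : ℕ, (0 : ℝ) < 1 / ((n : ℝ) + 1) := fun n => by positivity
  refine ⟨u.image Prod.fst, 1 / (((u.sup Prod.snd : ℕ) : ℝ) + 1), hpos _, ?_⟩
  intro p hp hπp hψ
  have : p ∈ (∅ : Set (X × X)) := by
    rw [← hu]
    refine ⟨hp, ?_⟩
    simp only [Set.mem_iInter]
    intro i hi
    have hle : (i.2 : ℝ) ≤ ((u.sup Prod.snd : ℕ) : ℝ) := by
      exact_mod_cast Finset.le_sup (f := Prod.snd) hi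
    have hle' : 1 / (((u.sup Prod.snd : ℕ) : ℝ) + 1) ≤ 1 / ((i.2 : ℝ) + 1) :=
      one_div_le_one_div_of_le (by positivity) (by linarith)
    exact ⟨(hψ _ (Finset.mem_image_of_mem _ hi)).le.trans hle', hπp.le.trans hle'⟩
  exact this

/-! ### Følner sequences -/

section Pointwise

open scoped Pointwise

/-- Along a Følner sequence, `K * F i` exceeds `F i` by a negligible amount. -/
lemma IsFolner.eventually_mul_sdiff {Γ : Type*} [Group Γ] [DecidableEq Γ] {F : ℕ → Finset Γ}
    (hF : IsFolner F) (K : Finset Γ) {ε : ℝ} (hε : 0 < ε) :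
    ∀ᶠ i in atTop, (((K * F i) \ F i).card : ℝ) ≤ ε * (F i).card := by
  have h1 : ∀ g ∈ K, ∀ᶠ i in atTop,
      ((((fun h => g * h) '' ↑(F i) \ (↑(F i) : Set Γ)).ncard : ℝ) / (F i).card)
        < ε / (K.card + 1) := fun g _ => (hF.2 g).eventually_lt_const (by positivity)
  filter_upwards [(Filter.eventually_all_finset K).2 h1] with i hi
  have hpos : (0 : ℝ) < (F i).card := by exact_mod_cast (hF.1 i).card_pos
  have hsub : (K * F i) \ F i ⊆ K.biUnion fun g => ((F i).image fun h => g * h) \ F i := by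
    intro x hx
    rw [Finset.mem_sdiff, Finset.mem_mul] at hx
    obtain ⟨⟨g, hg, f, hf, rfl⟩, hx⟩ := hx
    exact Finset.mem_biUnion.2 ⟨g, hg, Finset.mem_sdiff.2
      ⟨Finset.mem_image_of_mem _ hf, hx⟩⟩
  calc (((K * F i) \ F i).card : ℝ)
      ≤ ∑ g ∈ K, ((((F i).image fun h => g * h) \ F i).card : ℝ) := by
        exact_mod_cast (Finset.card_le_card hsub).trans Finset.card_biUnion_le
    _ ≤ ∑ g ∈ K, ε / (K.card + 1) * (F i).card := by
        refine Finset.sum_le_sum fun g hg => ?_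
        have := (div_lt_iff₀ hpos).1 (hi g hg)
        rw [← Finset.coe_image, ← Finset.coe_sdiff, Set.ncard_coe_finset] at this
        exact this.le
    _ = (K.card / (K.card + 1)) * (ε * (F i).card) := by
        rw [Finset.sum_const, nsmul_eq_mul]; ring
    _ ≤ 1 * (ε * (F i).card) := by
        gcongr
        rw [div_le_one (by positivity)]
        linarith
    _ = _ := one_mul _

lemma IsFolner.eventually_card_mul_le {Γ : Type*} [Group Γ] [DecidableEq Γ] {F : ℕ → Finset Γ}
    (hF : IsFolner F) (K : Finset Γ) :
    ∀ᶠ i in atTop, ((K * F i).card : ℝ) ≤ 2 * (F i).card := by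
  filter_upwards [hF.eventually_mul_sdiff K one_pos] with i hi
  have h : (K * F i).card ≤ ((K * F i) \ F i).card + (F i).card := by
    have := Finset.le_card_sdiff (F i) (K * F i)
    omega
  have h' : ((K * F i).card : ℝ) ≤ ((K * F i) \ F i).card + (F i).card := by exact_mod_cast h
  linarith

lemma IsFolner.eventually_le_card {Γ : Type*} [Group Γ] [Infinite Γ] {F : ℕ → Finset Γ}
    (hF : IsFolner F) (N : ℕ) : ∀ᶠ i in atTop, N ≤ (F i).card := by
  classical
  obtain ⟨Q, hQ⟩ := Infinite.exists_subset_card_eq Γ (2 * N)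
  filter_upwards [hF.eventually_card_mul_le Q] with i hi
  have h1 : Q.card ≤ (Q * F i).card := Finset.card_le_card_mul_right (hF.1 i)
  have h2 : (2 * N : ℕ) ≤ 2 * (F i).card := by
    rw [hQ] at h1
    have : ((2 * N : ℕ) : ℝ) ≤ 2 * (F i).card := le_trans (by exact_mod_cast h1) hi
    exact_mod_cast this
  omega

/-! ### Finitely many non-injectivity points -/

/-- If `π` is injective off a finite set `M`, then points of a common class are told apart by
recording, at a sparse set of times `C`, which point of `M` is being shadowed: a visit near `M`
determines the position up to `c / 2` on a whole translate of `A⁻¹ * A`, so by Ruzsa's covering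
lemma `|C| ≤ 2 |F i| / |A|` records suffice. -/
lemma sep_bound_of_finite {Γ X Y : Type*} [Group Γ] [Infinite Γ]
    [MetricSpace X] [CompactSpace X] [MulAction Γ X]
    [MetricSpace Y] [CompactSpace Y] [MulAction Γ Y]
    (hcX : ∀ g : Γ, Continuous fun x : X => g • x)
    (hcY : ∀ g : Γ, Continuous fun y : Y => g • y)
    (π : X → Y) (hπc : Continuous π) (hπeq : ∀ (g : Γ) (x : X), π (g • x) = g • π x)
    (hM : {x : X | ∃ x', x' ≠ x ∧ π x' = π x}.Finite)
    (F : ℕ → Finset Γ) (hF : IsFolner F) {r ε c : ℝ} (hε : 0 < ε) (hc : 0 < c)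
    (hY : ∀ V : Set (Set Y), IsOpenCover V →
      ∀ᶠ i in atTop, Real.log (coverNum (coverJoin (F i) V)) ≤ r * (F i).card)
    (E : ℕ → Finset X) (hE : ∀ i, IsSep (F i) c (E i)) :
    ∀ᶠ i in atTop, Real.log ((E i).card) ≤ (r + ε) * (F i).card := by
  classical
  set M := hM.toFinset with hMdef
  set L := Real.log (M.card + 1) with hL
  have hL0 : 0 ≤ L := Real.log_nonneg (by linarith [Nat.cast_nonneg (α := ℝ) M.card])
  obtain ⟨n, hn⟩ := exists_nat_gt (2 * L / ε)
  have hn0 : (0 : ℝ) < n := lt_of_le_of_lt (by positivity) hn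
  obtain ⟨A, hA⟩ := Infinite.exists_subset_card_eq Γ n
  have hAne : A.Nonempty := Finset.card_pos.1 (by rw [hA]; exact_mod_cast hn0)
  have hmM : ∀ x, x ∈ M ↔ ∃ x', x' ≠ x ∧ π x' = π x := fun x => by simp [hMdef]
  -- a neighbourhood of `M` whose points shadow a point of `M` along `A⁻¹ * A`
  obtain ⟨N, hN⟩ : ∃ N : Set X,
      N = {z | ∃ m ∈ M, ∀ b ∈ A⁻¹ * A, dist (b • z) (b • m) < c / 2} := ⟨_, rfl⟩
  have hNo : IsOpen N := by
    have : N = ⋃ m ∈ M, ⋂ b ∈ A⁻¹ * A, {z | dist (b • z) (b • m) < c / 2} := by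
      ext z; simp [hN]
    rw [this]
    refine isOpen_biUnion fun m _ => isOpen_biInter_finset fun b _ => ?_
    exact isOpen_lt ((hcX b).dist continuous_const) continuous_const
  have hMN : ∀ z ∈ M, z ∈ N := fun z hz => by
    rw [hN]
    exact ⟨z, hz, fun b _ => by simp [hc]⟩
  -- pairs at distance `≥ c / 2` outside `N × N`: `π` separates them, so it does so uniformly
  set Z : Set (X × X) := {p | c / 2 ≤ dist p.1 p.2} ∩ (N ×ˢ N)ᶜ with hZ
  have hZc : IsClosed Z :=
    (isClosed_le continuous_const continuous_dist).inter (hNo.prod hNo).isClosed_compl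
  obtain ⟨K, δ, hδ, hsep⟩ := exists_uniform (Γ := Γ) hcX π hπc (0 : C(X, ℝ)) hZc (by
    rintro ⟨x, x'⟩ ⟨h1, h2⟩ hπ -
    have hne : x ≠ x' := by
      rintro rfl
      simp at h1
      linarith
    exact h2 ⟨hMN _ ((hmM x).2 ⟨x', hne.symm, hπ.symm⟩), hMN _ ((hmM x').2 ⟨x, hne, hπ⟩)⟩)
  have hsep' : ∀ x x', dist (π x) (π x') < δ → ¬ (x ∈ N ∧ x' ∈ N) → dist x x' < c / 2 := by
    intro x x' h1 h2
    by_contra! h3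
    exact hsep (x, x') ⟨h3, h2⟩ h1 (by simp [hδ])
  obtain ⟨V, hV, hcl⟩ := exists_classes (X := X) hcY π hπeq hδ
  have hch : ∀ z, ∃ m, z ∈ N → m ∈ M ∧ ∀ b ∈ A⁻¹ * A, dist (b • z) (b • m) < c / 2 := by
    intro z
    by_cases h : z ∈ N
    · rw [hN] at h
      obtain ⟨m, h⟩ := h
      exact ⟨m, fun _ => h⟩
    · exact ⟨z, fun h' => absurd h' h⟩
  choose m hm using hch
  filter_upwards [hY V hV, hF.eventually_card_mul_le A] with i hi1 hi2
  obtain ⟨P, Q, hPQ, hQ, hP⟩ := hcl (F i)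
  set k := ⌊2 * ((F i).card : ℝ) / n⌋₊ with hk
  have hclass : ∀ q ∈ Q, ((E i).filter fun x => P x = q).card ≤ (M.card + 1) ^ k := by
    intro q _
    set Eq := (E i).filter fun x => P x = q with hEq
    -- the times at which the whole class is in `N`; at other times the class has small diameter
    set S := (F i).filter fun g => ∀ x ∈ Eq, g • x ∈ N with hS
    have hcard : ((S⁻¹ * A⁻¹).card : ℝ) ≤ (2 * ((F i).card : ℝ) / n) * (A⁻¹).card := by
      rw [← mul_inv_rev, Finset.card_inv, Finset.card_inv, hA, div_mul_cancel₀ _ hn0.ne']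
      refine le_trans ?_ hi2
      exact_mod_cast Finset.card_le_card
        (Finset.mul_subset_mul_left (Finset.filter_subset _ _))
    obtain ⟨C, hCS, hCk, hSC⟩ := Finset.ruzsa_covering_mul hAne.inv hcard
    have hCk' : C.card ≤ k := Nat.le_floor hCk
    have hCN : ∀ a ∈ C, ∀ x ∈ Eq, a⁻¹ • x ∈ N := by
      intro a ha x hx
      have := hCS ha
      rw [Finset.mem_inv'] at this
      exact (Finset.mem_filter.1 this).2 x hx
    refine le_trans ?_ (Nat.pow_le_pow_right (Nat.succ_pos _) hCk')
    refine le_trans ?_ (Nat.pow_le_pow_left (Nat.le_succ _) _)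
    have hpi : (Fintype.piFinset fun _ : C => M).card = M.card ^ C.card := by simp
    rw [← hpi]
    refine Finset.card_le_card_of_injOn (fun x => fun a : C => m ((a : Γ)⁻¹ • x)) ?_ ?_
    · intro x hx
      simp only [Finset.mem_coe, Fintype.mem_piFinset]
      exact fun a => (hm _ (hCN a a.2 x hx)).1
    · intro x hx x' hx' hxx
      have hx1 := Finset.mem_filter.1 (Finset.mem_coe.1 hx)
      have hx1' := Finset.mem_filter.1 (Finset.mem_coe.1 hx')
      refine hE i x hx1.1 x' hx1'.1 fun g hg => ?_
      by_cases hgS : g ∈ S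
      · have hg' : g⁻¹ ∈ S⁻¹ := Finset.inv_mem_inv hgS
        obtain ⟨a, ha, b, hb, hab⟩ := Finset.mem_mul.1 (hSC hg')
        have hbB : b⁻¹ ∈ A⁻¹ * A := by
          have : (A⁻¹ / A⁻¹)⁻¹ = A⁻¹ * A := by rw [inv_div, div_inv_eq_mul]
          rw [← this]
          exact Finset.inv_mem_inv hb
        have hgab : g = b⁻¹ * a⁻¹ := by rw [← mul_inv_rev, hab, inv_inv]
        have e1 := (hm _ (hCN a ha x hx)).2 _ hbB
        have e2 := (hm _ (hCN a ha x' hx')).2 _ hbB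
        have e3 : m (a⁻¹ • x) = m (a⁻¹ • x') := congrFun hxx ⟨a, ha⟩
        rw [← e3] at e2
        rw [smul_smul, ← hgab] at e1 e2
        have := dist_triangle_right (g • x) (g • x') (b⁻¹ • m (a⁻¹ • x))
        linarith
      · have : ∃ z ∈ Eq, g • z ∉ N := by
          by_contra! h
          exact hgS (Finset.mem_filter.2 ⟨hg, h⟩)
        obtain ⟨z, hz, hzN⟩ := this
        have hz1 := Finset.mem_filter.1 hz
        have e1 := hsep' _ _ (hP x z (hx1.2.trans hz1.2.symm) g hg) fun h => hzN h.2
        have e2 := hsep' _ _ (hP x' z (hx1'.2.trans hz1.2.symm) g hg) fun h => hzN h.2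
        have := dist_triangle_right (g • x) (g • x') (g • z)
        linarith
  have htot : (E i).card ≤ (M.card + 1) ^ k * Q.card :=
    Finset.card_le_mul_card_image_of_maps_to (fun x _ => hPQ x) _ hclass
  have hFpos : (0 : ℝ) < (F i).card := by exact_mod_cast (hF.1 i).card_pos
  have hkL : (k : ℝ) * L ≤ ε * (F i).card := by
    have h1 : (k : ℝ) ≤ 2 * ((F i).card : ℝ) / n := Nat.floor_le (by positivity)
    calc (k : ℝ) * L ≤ 2 * ((F i).card : ℝ) / n * L := by gcongr
      _ = (2 * L / n) * (F i).card := by ring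
      _ ≤ ε * (F i).card := by
        gcongr
        rw [div_le_iff₀ hn0]
        rw [div_lt_iff₀ hε] at hn
        linarith
  rcases Nat.eq_zero_or_pos (E i).card with h0 | h0
  · have hr : 0 ≤ r * (F i).card := le_trans (Real.log_natCast_nonneg _) hi1
    rw [h0]
    simp only [Nat.cast_zero, Real.log_zero]
    nlinarith [mul_pos hε hFpos]
  · have hQ0 : 0 < Q.card := Nat.pos_of_ne_zero fun h => by
      rw [h, mul_zero] at htot
      omega
    calc Real.log ((E i).card)
        ≤ Real.log (((M.card : ℝ) + 1) ^ k * Q.card) :=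
          Real.log_le_log (by exact_mod_cast h0) (by exact_mod_cast htot)
      _ = k * L + Real.log Q.card := by
          rw [Real.log_mul (by positivity) (by positivity), Real.log_pow]
      _ ≤ ε * (F i).card + r * (F i).card := by rw [hQ]; exact add_le_add hkL hi1
      _ = _ := by ring

/-! ### Staircase functions -/

/-- The continuous staircase on `[0, 1]` with `k` steps of height `1 / k`; its `j`-th rise takes
place on the interval `k t ∈ [j + s / N, j + (s + 1) / N]`. -/
noncomputable def stair (k N s : ℕ) (t : ℝ) : ℝ :=
  (∑ j ∈ Finset.range k, max 0 (min 1 ((N : ℝ) * (k * t - j) - s))) / k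

/-- The interiors of the rises of `stair k N s`. -/
def rise (k N s : ℕ) : Set ℝ :=
  {t | ∃ j : ℕ, (s : ℝ) < N * (k * t - j) ∧ N * (k * t - j) < s + 1}

lemma continuous_stair (k N s : ℕ) : Continuous (stair k N s) := by
  unfold stair
  fun_prop

lemma rise_disjoint {k N s s' : ℕ} (hs : s < N) (hs' : s' < N) (hss : s ≠ s') :
    Disjoint (rise k N s) (rise k N s') := by
  rw [Set.disjoint_left]
  rintro t ⟨j, h1, h2⟩ ⟨j', h1', h2'⟩
  have e1 : s + N * j < s' + N * j' + 1 := by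
    have : (s : ℝ) + N * j < s' + N * j' + 1 := by linarith
    exact_mod_cast this
  have e2 : s' + N * j' < s + N * j + 1 := by
    have : (s' : ℝ) + N * j' < s + N * j + 1 := by linarith
    exact_mod_cast this
  have e3 : s + N * j = s' + N * j' := by omega
  have e4 := congrArg (· % N) e3
  simp only [Nat.add_mul_mod_self_left, Nat.mod_eq_of_lt hs, Nat.mod_eq_of_lt hs'] at e4
  exact hss e4

lemma stair_zero (k N s : ℕ) : stair k N s 0 = 0 := by
  unfold stair
  rw [Finset.sum_eq_zero, zero_div]
  intro j _
  refine max_eq_left (le_trans (min_le_right _ _) ?_)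
  have : (0 : ℝ) ≤ N * j := by positivity
  have : (0 : ℝ) ≤ s := by positivity
  nlinarith

lemma stair_term_eq_one {N s : ℕ} (hs : s < N) {u : ℝ} (hu : 1 ≤ u) :
    max 0 (min 1 ((N : ℝ) * u - s)) = 1 := by
  have h1 : (s : ℝ) + 1 ≤ N := by exact_mod_cast hs
  have h2 : (N : ℝ) ≤ N * u := by nlinarith [Nat.cast_nonneg (α := ℝ) N]
  rw [min_eq_left (by linarith), max_eq_right zero_le_one]

lemma stair_one {k N s : ℕ} (hk : 0 < k) (hs : s < N) : stair k N s 1 = 1 := by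
  unfold stair
  have hk' : (k : ℝ) ≠ 0 := by positivity
  rw [Finset.sum_congr rfl (g := fun _ => (1 : ℝ))]
  · simp [hk']
  · intro j hj
    refine stair_term_eq_one hs ?_
    have : (j : ℝ) + 1 ≤ k := by exact_mod_cast Finset.mem_range.1 hj
    linarith

lemma stair_bounds {k N s : ℕ} (hs : s < N) {t : ℝ} (ht : t ∈ Set.Icc (0 : ℝ) 1) :
    (⌊k * t⌋₊ : ℝ) ≤ ∑ j ∈ Finset.range k, max 0 (min 1 ((N : ℝ) * (k * t - j) - s)) ∧
    ∑ j ∈ Finset.range k, max 0 (min 1 ((N : ℝ) * (k * t - j) - s)) ≤ ⌊k * t⌋₊ + 1 := by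
  have hkt : 0 ≤ (k : ℝ) * t := mul_nonneg (Nat.cast_nonneg _) ht.1
  have hfl : (⌊k * t⌋₊ : ℝ) ≤ k * t := Nat.floor_le hkt
  have hfl' : (k : ℝ) * t < ⌊k * t⌋₊ + 1 := Nat.lt_floor_add_one _
  have hle : ⌊k * t⌋₊ ≤ k := by
    have : (⌊k * t⌋₊ : ℝ) ≤ k := by nlinarith [ht.2, Nat.cast_nonneg (α := ℝ) k]
    exact_mod_cast this
  constructor
  · calc (⌊k * t⌋₊ : ℝ) = ∑ j ∈ Finset.range ⌊k * t⌋₊, (1 : ℝ) := by simp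
      _ ≤ ∑ j ∈ Finset.range ⌊k * t⌋₊, max 0 (min 1 ((N : ℝ) * (k * t - j) - s)) := by
        refine Finset.sum_le_sum fun j hj => (stair_term_eq_one hs ?_).ge
        have : (j : ℝ) + 1 ≤ ⌊k * t⌋₊ := by exact_mod_cast Finset.mem_range.1 hj
        linarith
      _ ≤ _ := Finset.sum_le_sum_of_subset_of_nonneg (Finset.range_mono hle)
        fun _ _ _ => le_max_left _ _
  · calc ∑ j ∈ Finset.range k, max 0 (min 1 ((N : ℝ) * (k * t - j) - s))
        ≤ ∑ j ∈ Finset.range k, (if j < ⌊k * t⌋₊ + 1 then (1 : ℝ) else 0) := by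
          refine Finset.sum_le_sum fun j _ => ?_
          split_ifs with h
          · exact max_le zero_le_one (min_le_left _ _)
          · refine max_le le_rfl ((min_le_right _ _).trans ?_)
            have h1 : (⌊k * t⌋₊ : ℝ) + 1 ≤ j := by exact_mod_cast not_lt.1 h
            have h2 : (N : ℝ) * (k * t - j) ≤ 0 :=
              mul_nonpos_of_nonneg_of_nonpos (Nat.cast_nonneg _) (by linarith)
            linarith [Nat.cast_nonneg (α := ℝ) s]
      _ = (((Finset.range k).filter fun j => j < ⌊k * t⌋₊ + 1).card : ℝ) := by
          rw [Finset.sum_ite]; simp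
      _ ≤ ((Finset.range (⌊k * t⌋₊ + 1)).card : ℝ) := by
          refine Nat.cast_le.2 (Finset.card_le_card fun j hj => ?_)
          exact Finset.mem_range.2 (Finset.mem_filter.1 hj).2
      _ = _ := by simp

lemma abs_stair_sub_le {k N s : ℕ} (hk : 0 < k) (hs : s < N) {t : ℝ}
    (ht : t ∈ Set.Icc (0 : ℝ) 1) : |stair k N s t - t| ≤ 1 / k := by
  have hk' : (0 : ℝ) < k := by exact_mod_cast hk
  obtain ⟨h1, h2⟩ := stair_bounds (k := k) hs ht
  have h3 : (⌊k * t⌋₊ : ℝ) ≤ k * t := Nat.floor_le (mul_nonneg hk'.le ht.1)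
  have h4 : (k : ℝ) * t < ⌊k * t⌋₊ + 1 := Nat.lt_floor_add_one _
  have : stair k N s t - t =
      (∑ j ∈ Finset.range k, max 0 (min 1 ((N : ℝ) * (k * t - j) - s)) - k * t) / k := by
    unfold stair
    field_simp
  rw [this, abs_div, abs_of_pos hk']
  gcongr
  rw [abs_le]
  constructor <;> linarith

lemma stair_mem_Icc (k N s : ℕ) (t : ℝ) : stair k N s t ∈ Set.Icc (0 : ℝ) 1 := by
  unfold stair
  constructor
  · exact div_nonneg (Finset.sum_nonneg fun _ _ => le_max_left _ _) (Nat.cast_nonneg _)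
  · refine div_le_one_of_le₀ ?_ (Nat.cast_nonneg _)
    calc _ ≤ ∑ _j ∈ Finset.range k, (1 : ℝ) :=
          Finset.sum_le_sum fun _ _ => max_le zero_le_one (min_le_left _ _)
      _ = k := by simp

lemma stair_eq_of_notMem {k N s : ℕ} {t : ℝ} (ht : t ∉ rise k N s) :
    ∃ n : ℕ, stair k N s t = n / k := by
  refine ⟨∑ j ∈ Finset.range k, if (s : ℝ) < N * (k * t - j) then 1 else 0, ?_⟩
  unfold stair
  push_cast
  congr 1
  refine Finset.sum_congr rfl fun j _ => ?_
  split_ifs with h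
  · have : ¬ (N * (k * t - j) < (s : ℝ) + 1) := fun h' => ht ⟨j, h, h'⟩
    rw [min_eq_left (by linarith), max_eq_right zero_le_one]
  · exact max_eq_left ((min_le_right _ _).trans (by linarith))

/-! ### Visit counts along an ultrafilter -/

/-- The number of pairs `(g, x) ∈ F × E` with `g • x ∈ S`, as a real number. -/
noncomputable def visits {Γ X : Type*} [Group Γ] [MulAction Γ X] (F : Finset Γ) (E : Finset X)
    (S : Set X) : ℝ :=
  ∑ g ∈ F, ∑ x ∈ E, S.indicator (fun _ => (1 : ℝ)) (g • x)

lemma visits_mono {Γ X : Type*} [Group Γ] [MulAction Γ X] (F : Finset Γ) (E : Finset X)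
    {S T : Set X} (h : S ⊆ T) : visits F E S ≤ visits F E T :=
  Finset.sum_le_sum fun _ _ => Finset.sum_le_sum fun _ _ =>
    Set.indicator_le_indicator_of_subset h (fun _ => zero_le_one) _

/-- Among `N` disjoint sets, one is visited with frequency at most `1 / N` for almost all `i`:
this holds for each `i` with a set depending on `i`, and the ultrafilter selects one of them. -/
lemma exists_few_visits {Γ X ι : Type*} [Group Γ] [MulAction Γ X] (ω : Ultrafilter ℕ)
    (F : ℕ → Finset Γ) (E : ℕ → Finset X) (J : Finset ι) (hJ : J.Nonempty) (S : ι → Set X)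
    (hS : (J : Set ι).PairwiseDisjoint S) :
    ∃ j ∈ J, ∀ᶠ i in (ω : Filter ℕ),
      visits (F i) (E i) (S j) ≤ (F i).card * (E i).card / J.card := by
  have hJ0 : (0 : ℝ) < J.card := by exact_mod_cast hJ.card_pos
  have h : ∀ i, ∃ j ∈ (J : Set ι),
      visits (F i) (E i) (S j) ≤ (F i).card * (E i).card / J.card := by
    intro i
    have hsum : ∑ j ∈ J, visits (F i) (E i) (S j) ≤
        ∑ _j ∈ J, ((F i).card * (E i).card / J.card : ℝ) := by
      rw [Finset.sum_const, nsmul_eq_mul, mul_div_cancel₀ _ hJ0.ne']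
      calc ∑ j ∈ J, visits (F i) (E i) (S j)
          = ∑ g ∈ F i, ∑ x ∈ E i, ∑ j ∈ J, (S j).indicator (fun _ => (1 : ℝ)) (g • x) := by
            unfold visits
            rw [Finset.sum_comm]
            exact Finset.sum_congr rfl fun g _ => Finset.sum_comm
        _ ≤ ∑ g ∈ F i, ∑ x ∈ E i, (1 : ℝ) := by
            refine Finset.sum_le_sum fun g _ => Finset.sum_le_sum fun x _ => ?_
            rw [← Finset.indicator_biUnion_apply J S (fun a ha b hb hab => hS ha hb hab)]
            exact Set.indicator_le_self' (fun _ _ => zero_le_one) _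
        _ = _ := by simp
    obtain ⟨j, hj, h⟩ := Finset.exists_le_of_sum_le hJ hsum
    exact ⟨j, hj, h⟩
  exact (Ultrafilter.eventually_exists_mem_iff J.finite_toSet).1 (Eventually.of_forall h)

/-- One refinement step: composing with a `k`-step staircase whose rises are rarely visited. -/
lemma exists_step_s10 {Γ X : Type*} [Group Γ] [TopologicalSpace X] [MulAction Γ X]
    (ω : Ultrafilter ℕ) (F : ℕ → Finset Γ) (E : ℕ → Finset X) (ψ : C(X, ℝ))
    (hψ : ∀ x, ψ x ∈ Set.Icc (0 : ℝ) 1) {k : ℕ} (hk : 0 < k) {η : ℝ} (hη : 0 < η) :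
    ∃ (ψ' : C(X, ℝ)) (S : Set X), (∀ x, ψ' x ∈ Set.Icc (0 : ℝ) 1) ∧
      (∀ x, |ψ' x - ψ x| ≤ 1 / k) ∧ (∀ x, x ∉ S → ∃ n : ℕ, ψ' x = n / k) ∧
      (∀ x x', ψ x = ψ x' → ψ' x = ψ' x') ∧ (∀ x, ψ x = 0 → ψ' x = 0) ∧
      (∀ x, ψ x = 1 → ψ' x = 1) ∧
      ∀ᶠ i in (ω : Filter ℕ), visits (F i) (E i) S ≤ η * ((F i).card * (E i).card) := by
  obtain ⟨N, hN⟩ := exists_nat_gt (1 / η)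
  have hN0 : (0 : ℝ) < N := lt_trans (by positivity) hN
  obtain ⟨s, hs, hv⟩ := exists_few_visits ω F E (Finset.range N)
    ⟨0, Finset.mem_range.2 (by exact_mod_cast hN0)⟩ (fun s => ψ ⁻¹' rise k N s) (by
      intro s hs s' hs' hne
      simp only [Finset.coe_range, Set.mem_Iio] at hs hs'
      exact (rise_disjoint hs hs' hne).preimage ψ)
  have hs := Finset.mem_range.1 hs
  refine ⟨⟨fun x => stair k N s (ψ x), (continuous_stair k N s).comp ψ.continuous⟩,
    ψ ⁻¹' rise k N s, fun x => stair_mem_Icc _ _ _ _, fun x => abs_stair_sub_le hk hs (hψ x),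
    fun x hx => stair_eq_of_notMem hx, fun x x' h => by simp [h],
    fun x h => by simp [h, stair_zero], fun x h => by simp [h, stair_one hk hs], ?_⟩
  filter_upwards [hv] with i hi
  refine hi.trans ?_
  rw [Finset.card_range, div_eq_inv_mul]
  gcongr
  rw [one_div] at hN
  exact (inv_lt_of_inv_lt₀ hη hN).le

/-! ### A function with cheap codes -/

/-- A continuous `ψ` that is non-constant on a fibre of `π` and, at every resolution `δ`, admits
a finite code whose symbols carry weights of total mass at most `1 + 4 e`, while the average
cost (minus the logarithm of the weight) along the sets `F i`, `E i` is at most `e`.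

`ψ` is the limit of `ψ₀, ψ₁, …`, where `ψ₀` is a bump with rarely visited support and
`ψₙ₊₁` is a `2 ^ (n + 1)`-step staircase of `ψₙ`. Off the rarely visited set `S n`, the
value of `ψₙ`, hence that of `ψ`, is one of finitely many; the code of `x` records the first
`n` with `x ∉ S n` together with that value. -/
lemma exists_cheap_code {Γ X Y : Type*} [Group Γ] [MetricSpace X] [CompactSpace X]
    [MulAction Γ X] (π : X → Y) (hM : {x : X | ∃ x', x' ≠ x ∧ π x' = π x}.Infinite)
    (ω : Ultrafilter ℕ) (F : ℕ → Finset Γ) (E : ℕ → Finset X) {e : ℝ} (he : 0 < e) (he1 : e < 1) :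
    ∃ (ψ : C(X, ℝ)) (x₀ x₁ : X), π x₀ = π x₁ ∧ ψ x₀ ≠ ψ x₁ ∧ ∀ δ : ℝ, 0 < δ →
      ∃ (T : Finset (Σ _ : ℕ, ℕ)) (w : (Σ _ : ℕ, ℕ) → ℝ) (code : X → Σ _ : ℕ, ℕ) (cost : X → ℝ)
        (B : ℝ), (∀ x, code x ∈ T) ∧ (∀ a, 0 ≤ w a) ∧ ∑ a ∈ T, w a ≤ 1 + 4 * e ∧
        (∀ x, Real.exp (-cost x) ≤ w (code x)) ∧ (∀ x, 0 ≤ cost x) ∧ (∀ x, cost x ≤ B) ∧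
        (∀ x x', code x = code x' → dist (ψ x) (ψ x') < δ) ∧
        ∀ᶠ i in (ω : Filter ℕ), ∑ g ∈ F i, ∑ x ∈ E i, cost (g • x) ≤
          e * ((F i).card * (E i).card) := by
  classical
  -- cost of a symbol of level `j`, and the admissible visit frequencies
  set c : ℕ → ℝ := fun j => Real.log (4 ^ j / e) with hc
  have hcpos : ∀ j, 0 < c j := fun j => Real.log_pos (by
    rw [one_lt_div he]
    exact he1.trans_le (one_le_pow₀ (by norm_num)))
  set η : ℕ → ℝ := fun j => e / (2 ^ (j + 1) * c (j + 1)) with hη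
  have hηpos : ∀ j, 0 < η j := fun j => div_pos he (mul_pos (by positivity) (hcpos _))
  -- a rarely visited bump
  obtain ⟨ψ₀, x₀, x₁, hπ, hψ₀, h₀, h₁, hv₀⟩ : ∃ (ψ₀ : C(X, ℝ)) (x₀ x₁ : X), π x₀ = π x₁ ∧
      (∀ x, ψ₀ x ∈ Set.Icc (0 : ℝ) 1) ∧ ψ₀ x₀ = 1 ∧ ψ₀ x₁ = 0 ∧
      ∀ᶠ i in (ω : Filter ℕ),
        visits (F i) (E i) {x | ψ₀ x ≠ 0} ≤ η 0 * ((F i).card * (E i).card) := by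
    obtain ⟨N, hN⟩ := exists_nat_gt (1 / η 0)
    have hN0 : (0 : ℝ) < N := lt_trans (by have := hηpos 0; positivity) hN
    obtain ⟨J, hJM, hJN⟩ := hM.exists_subset_card_eq N
    obtain ⟨U, hU, hUd⟩ := J.finite_toSet.t2_separation
    obtain ⟨x₀, hx₀, hv⟩ := exists_few_visits ω F E J
      (Finset.card_pos.1 (by rw [hJN]; exact_mod_cast hN0)) U hUd
    obtain ⟨x₁, hne, hπ⟩ := hJM hx₀
    obtain ⟨ρ, hρ, hball⟩ := Metric.isOpen_iff.1 ((hU x₀).2.inter (isOpen_compl_singleton (x := x₁)))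
      x₀ ⟨(hU x₀).1, hne.symm⟩
    refine ⟨⟨fun x => max 0 (1 - dist x x₀ / ρ), by fun_prop⟩, x₀, x₁, hπ.symm, ?_, ?_, ?_, ?_⟩
    · intro x
      have : 0 ≤ dist x x₀ / ρ := by positivity
      exact ⟨le_max_left _ _, max_le zero_le_one (by linarith)⟩
    · simp
    · have : ρ ≤ dist x₁ x₀ := by
        by_contra! h
        exact (hball h).2 rfl
      have : 1 ≤ dist x₁ x₀ / ρ := (one_le_div hρ).2 this
      exact max_eq_left (by linarith)
    · filter_upwards [hv] with i hi
      refine le_trans (visits_mono _ _ ?_) (hi.trans ?_)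
      · intro x hx
        refine (hball ?_).1
        by_contra! h
        rw [Metric.mem_ball, not_lt] at h
        have : 1 ≤ dist x x₀ / ρ := (one_le_div hρ).2 h
        exact hx (max_eq_left (by linarith))
      · rw [hJN, div_eq_inv_mul]
        gcongr
        rw [one_div] at hN
        exact (inv_lt_of_inv_lt₀ (hηpos 0) hN).le
  -- iterated staircases
  have hstep := fun (n : ℕ) (ψ : {ψ : C(X, ℝ) // ∀ x, ψ x ∈ Set.Icc (0 : ℝ) 1}) =>
    exists_step_s10 ω F E ψ.1 ψ.2 (k := 2 ^ (n + 1)) (by positivity) (hηpos (n + 1))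
  choose nx S' hIcc hdist hgrid hfac hzero hone hvis using hstep
  let Ψ : ℕ → {ψ : C(X, ℝ) // ∀ x, ψ x ∈ Set.Icc (0 : ℝ) 1} := fun n =>
    Nat.rec ⟨ψ₀, hψ₀⟩ (fun n ψ => ⟨nx n ψ, hIcc n ψ⟩) n
  have hΨs : ∀ n, (Ψ (n + 1)).1 = nx n (Ψ n) := fun n => rfl
  let S : ℕ → Set X := fun n => Nat.casesOn n {x | ψ₀ x ≠ 0} (fun n => S' n (Ψ n))
  have hS0 : S 0 = {x | ψ₀ x ≠ 0} := rfl
  have hSs : ∀ n, S (n + 1) = S' n (Ψ n) := fun n => rfl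
  have hSgrid : ∀ n x, x ∉ S n → ∃ a : ℕ, (Ψ n).1 x = a / 2 ^ n := by
    intro n x hx
    cases n with
    | zero =>
      have hz : (Ψ 0).1 x = 0 := not_not.1 hx
      exact ⟨0, by rw [hz]; simp⟩
    | succ n =>
      obtain ⟨a, ha⟩ := hgrid n (Ψ n) x hx
      exact ⟨a, by rw [hΨs, ha]; push_cast; rfl⟩
  have hSvis : ∀ n, ∀ᶠ i in (ω : Filter ℕ),
      visits (F i) (E i) (S n) ≤ η n * ((F i).card * (E i).card) := by
    intro n
    cases n with
    | zero => exact hv₀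
    | succ n => exact hvis n (Ψ n)
  have hcl : ∀ n, dist (Ψ n).1 (Ψ (n + 1)).1 ≤ 1 / 2 / 2 ^ n := by
    intro n
    rw [dist_comm, ContinuousMap.dist_le (by positivity)]
    intro x
    rw [Real.dist_eq, hΨs]
    refine (hdist n (Ψ n) x).trans (le_of_eq ?_)
    push_cast
    rw [pow_succ']
    field_simp
  obtain ⟨ψ, hψ⟩ := cauchySeq_tendsto_of_complete (cauchySeq_of_le_geometric_two hcl)
  have hlim : ∀ n, dist (Ψ n).1 ψ ≤ 1 / 2 ^ n :=
    dist_le_of_le_geometric_two_of_tendsto hcl hψ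
  have hlimx : ∀ n x, dist ((Ψ n).1 x) (ψ x) ≤ 1 / 2 ^ n := fun n x =>
    (ContinuousMap.dist_apply_le_dist x).trans (hlim n)
  have hev : ∀ x, Tendsto (fun n => (Ψ n).1 x) atTop (nhds (ψ x)) := fun x =>
    ((continuous_eval_const (F := C(X, ℝ)) x).tendsto ψ).comp hψ
  have hfacn : ∀ n x x', (Ψ n).1 x = (Ψ n).1 x' → ψ x = ψ x' := by
    intro n x x' h
    have hk : ∀ k, (Ψ (n + k)).1 x = (Ψ (n + k)).1 x' := by
      intro k
      induction k with
      | zero => exact h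
      | succ k ih => exact hfac (n + k) (Ψ (n + k)) x x' ih
    refine tendsto_nhds_unique (hev x) ((hev x').congr' ?_)
    filter_upwards [eventually_ge_atTop n] with k hkn
    obtain ⟨l, rfl⟩ := Nat.exists_eq_add_of_le hkn
    exact (hk l).symm
  have hψ1 : ψ x₀ = 1 := by
    have : ∀ n, (Ψ n).1 x₀ = 1 := fun n => by
      induction n with
      | zero => exact h₀
      | succ n ih => exact hone n (Ψ n) x₀ ih
    exact tendsto_nhds_unique (hev x₀) (by simp [this])
  have hψ0 : ψ x₁ = 0 := by
    have : ∀ n, (Ψ n).1 x₁ = 0 := fun n => by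
      induction n with
      | zero => exact h₁
      | succ n ih => exact hzero n (Ψ n) x₁ ih
    exact tendsto_nhds_unique (hev x₁) (by simp [this])
  refine ⟨ψ, x₀, x₁, hπ, by rw [hψ1, hψ0]; exact one_ne_zero, fun δ hδ => ?_⟩
  obtain ⟨m, hm0, hm⟩ : ∃ m : ℕ, m ≠ 0 ∧ 1 / (2 : ℝ) ^ m < δ / 3 := by
    obtain ⟨m, hm⟩ := exists_pow_lt_of_lt_one (show 0 < δ / 3 by positivity)
      (show (1 / 2 : ℝ) < 1 by norm_num)
    refine ⟨m + 1, m.succ_ne_zero, lt_of_le_of_lt ?_ hm⟩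
    rw [← one_div_pow]
    exact pow_le_pow_of_le_one (by norm_num) (by norm_num) m.le_succ
  -- the level of a point, truncated at `m`
  have hlev : ∀ x : X, ∃ j, (x ∉ S j ∨ j = m) ∧ ∀ k < j, ¬ (x ∉ S k ∨ k = m) := fun x => by
    have hex : ∃ j, x ∉ S j ∨ j = m := ⟨m, Or.inr rfl⟩
    have : DecidablePred fun j => x ∉ S j ∨ j = m := Classical.decPred _
    exact ⟨Nat.find hex, Nat.find_spec hex, fun k hk => Nat.find_min hex hk⟩
  choose lev hlev1 hlevmin using hlev
  have hlevm : ∀ x, lev x ≤ m := fun x => not_lt.1 fun h => hlevmin x m h (Or.inr rfl)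
  have hlev2 : ∀ x j, j < lev x → x ∈ S j := fun x j hj => by
    by_contra h
    exact hlevmin x j hj (Or.inl h)
  let code : X → Σ _ : ℕ, ℕ := fun x => ⟨lev x, ⌊2 ^ lev x * (Ψ (lev x)).1 x⌋₊⟩
  let w : (Σ _ : ℕ, ℕ) → ℝ := fun a => (if a.1 = 0 ∧ a.2 = 0 then 1 else 0) + e / 4 ^ a.1
  let cost : X → ℝ := fun x =>
    ∑ j ∈ Finset.range m, c (j + 1) * (S j).indicator (fun _ => (1 : ℝ)) x
  have hterm : ∀ j x, 0 ≤ c (j + 1) * (S j).indicator (fun _ => (1 : ℝ)) x := fun j x =>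
    mul_nonneg (hcpos _).le (Set.indicator_nonneg (fun _ _ => zero_le_one) _)
  have hcost0 : ∀ x, 0 ≤ cost x := fun x => Finset.sum_nonneg fun j _ => hterm j x
  refine ⟨(Finset.range (m + 1)).sigma fun j => Finset.range (2 ^ j + 1), w, code, cost,
    ∑ j ∈ Finset.range m, c (j + 1), ?_, ?_, ?_, ?_, hcost0, ?_, ?_, ?_⟩
  · intro x
    simp only [Finset.mem_sigma, Finset.mem_range, code]
    refine ⟨Nat.lt_succ_of_le (hlevm x), Nat.lt_succ_of_le ?_⟩
    refine Nat.floor_le_of_le ?_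
    push_cast
    exact mul_le_of_le_one_right (by positivity) ((Ψ _).2 x).2
  · intro a
    simp only [w]
    have : 0 ≤ e / 4 ^ a.1 := by positivity
    split_ifs <;> linarith
  · rw [Finset.sum_sigma]
    simp only [w, Finset.sum_add_distrib, Finset.sum_const, Finset.card_range, nsmul_eq_mul]
    refine add_le_add ?_ ?_
    · rw [Finset.sum_eq_single 0, Finset.sum_eq_single 0]
      · simp
      · intro b _ hb; simp [hb]
      · simp
      · intro b _ hb; simp [hb]
      · simp
    · calc ∑ j ∈ Finset.range (m + 1), ((2 ^ j + 1 : ℕ) : ℝ) * (e / 4 ^ j)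
          ≤ ∑ j ∈ Finset.range (m + 1), 2 * e * (1 / 2 : ℝ) ^ j := by
            refine Finset.sum_le_sum fun j _ => ?_
            have h2 : (1 : ℝ) ≤ 2 ^ j := one_le_pow₀ (by norm_num)
            have h4 : (4 : ℝ) ^ j = 2 ^ j * 2 ^ j := by rw [← mul_pow]; norm_num
            push_cast
            rw [h4, one_div_pow, mul_div_assoc', mul_one_div, div_le_div_iff₀ (by positivity)
              (by positivity)]
            nlinarith [mul_pos he (show (0 : ℝ) < 2 ^ j by positivity),
              mul_le_mul_of_nonneg_left h2
                (mul_pos he (show (0 : ℝ) < 2 ^ j by positivity)).le]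
        _ = 2 * e * ∑ j ∈ Finset.range (m + 1), (1 / 2 : ℝ) ^ j := by rw [Finset.mul_sum]
        _ ≤ 2 * e * 2 := by
            gcongr
            exact sum_geometric_two_le _
        _ = 4 * e := by ring
  · intro x
    simp only [w, code]
    rcases Nat.eq_zero_or_pos (lev x) with h0 | hpos
    · have hx : x ∉ S 0 := by
        have := hlev1 x
        rw [h0] at this
        exact this.resolve_right hm0.symm
      have hz : (Ψ 0).1 x = 0 := not_not.1 hx
      have h1 : Real.exp (-cost x) ≤ 1 := Real.exp_le_one_iff.2 (by linarith [hcost0 x])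
      rw [h0]
      simp only [hz, mul_zero, Nat.floor_zero, and_self, if_true, pow_zero, div_one]
      linarith
    · obtain ⟨j, hj⟩ := Nat.exists_eq_succ_of_ne_zero hpos.ne'
      have hxj : x ∈ S j := hlev2 x j (by omega)
      have hjm : j ∈ Finset.range m := Finset.mem_range.2 (by have := hlevm x; omega)
      have h1 : c (j + 1) ≤ cost x := by
        have := Finset.single_le_sum (fun j _ => hterm j x) hjm
        simpa [hxj] using this
      have h2 : Real.exp (-cost x) ≤ e / 4 ^ (j + 1) := by
        calc Real.exp (-cost x) ≤ Real.exp (-c (j + 1)) := Real.exp_le_exp.2 (by linarith)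
          _ = e / 4 ^ (j + 1) := by
            rw [hc, ← Real.log_inv, inv_div, Real.exp_log (by positivity)]
      rw [hj]
      have : ¬ (j.succ = 0 ∧ ⌊2 ^ j.succ * (Ψ j.succ).1 x⌋₊ = 0) := by simp
      rw [if_neg this]
      simpa using h2
  · intro x
    refine Finset.sum_le_sum fun j _ => ?_
    refine mul_le_of_le_one_right (hcpos _).le ?_
    exact Set.indicator_le_self' (fun _ _ => zero_le_one) _
  · intro x x' hxx
    simp only [code, Sigma.mk.injEq, heq_eq_eq] at hxx
    obtain ⟨hl, hfl⟩ := hxx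
    rw [← hl] at hfl
    by_cases hlm : lev x = m
    · rw [hlm] at hfl
      have p2 : (0 : ℝ) < 2 ^ m := by positivity
      have a1 := Nat.floor_le (mul_nonneg p2.le ((Ψ m).2 x).1)
      have a2 := Nat.lt_floor_add_one (2 ^ m * (Ψ m).1 x)
      have b1 := Nat.floor_le (mul_nonneg p2.le ((Ψ m).2 x').1)
      have b2 := Nat.lt_floor_add_one (2 ^ m * (Ψ m).1 x')
      rw [← hfl] at b1 b2
      have h3 : dist ((Ψ m).1 x) ((Ψ m).1 x') ≤ 1 / 2 ^ m := by
        rw [Real.dist_eq, le_div_iff₀ p2, ← abs_of_pos p2, ← abs_mul, abs_le]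
        constructor <;> nlinarith
      have h4 := hlimx m x
      have h5 := hlimx m x'
      rw [dist_comm] at h4
      have h6 := dist_triangle4 (ψ x) ((Ψ m).1 x) ((Ψ m).1 x') (ψ x')
      linarith
    · obtain ⟨a, ha⟩ := hSgrid _ x ((hlev1 x).resolve_right hlm)
      obtain ⟨b, hb⟩ := hSgrid _ x' ((hlev1 x').resolve_right (hl ▸ hlm))
      rw [← hl] at hb
      have p2 : (2 : ℝ) ^ lev x ≠ 0 := by positivity
      rw [ha, hb, mul_div_cancel₀ _ p2, mul_div_cancel₀ _ p2, Nat.floor_natCast,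
        Nat.floor_natCast] at hfl
      rw [hfacn (lev x) x x' (by rw [ha, hb, hfl]), dist_self]
      exact hδ
  · filter_upwards [(Filter.eventually_all_finset (Finset.range m)).2 fun j _ => hSvis j] with i hi
    have hFE : (0 : ℝ) ≤ (F i).card * (E i).card := by positivity
    calc ∑ g ∈ F i, ∑ x ∈ E i, cost (g • x)
        = ∑ j ∈ Finset.range m, c (j + 1) * visits (F i) (E i) (S j) := by
          simp only [cost, visits, Finset.mul_sum]
          exact (Finset.sum_congr rfl fun g _ => Finset.sum_comm).trans Finset.sum_comm
      _ ≤ ∑ j ∈ Finset.range m, e * ((F i).card * (E i).card) * (1 / 2 / 2 ^ j) := by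
          refine Finset.sum_le_sum fun j hj => ?_
          refine (mul_le_mul_of_nonneg_left (hi j hj) (hcpos _).le).trans (le_of_eq ?_)
          have := (hcpos (j + 1)).ne'
          simp only [hη]
          rw [pow_succ]
          field_simp
      _ = e * ((F i).card * (E i).card) * ((1 / 2) * ∑ j ∈ Finset.range m, (1 / 2 : ℝ) ^ j) := by
          rw [Finset.mul_sum, Finset.mul_sum]
          refine Finset.sum_congr rfl fun j _ => ?_
          rw [one_div_pow]
          ring
      _ ≤ e * ((F i).card * (E i).card) * ((1 / 2) * 2) := by
          gcongr
          exact sum_geometric_two_le _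
      _ = _ := by ring

/-! ### Counting separated points by codes -/

/-- If the codes of the points of `D` along `G` determine them and all these code words have
weight at least `θ`, then `D` has at most `(∑ w) ^ |G| / θ` points. -/
lemma card_mul_le_pow {ι X α : Type*} (G : Finset ι) (D : Finset X)
    (T : Finset α) {w : α → ℝ} (hw : ∀ a, 0 ≤ w a) (code : ι → X → α)
    (hT : ∀ g x, code g x ∈ T) {θ : ℝ} (hθ : ∀ x ∈ D, θ ≤ ∏ g ∈ G, w (code g x))
    (hinj : ∀ x ∈ D, ∀ x' ∈ D, (∀ g ∈ G, code g x = code g x') → x = x') :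
    D.card * θ ≤ (∑ a ∈ T, w a) ^ G.card := by
  classical
  have hI : Set.InjOn (fun (x : X) (g : ι) (_ : g ∈ G) => code g x) D := by
    intro x hx x' hx' h
    exact hinj x hx x' hx' fun g hg => congrFun (congrFun h g) hg
  calc D.card * θ = ∑ x ∈ D, θ := by rw [Finset.sum_const, nsmul_eq_mul]
    _ ≤ ∑ x ∈ D, ∏ g ∈ G.attach, w (code g.1 x) := Finset.sum_le_sum fun x hx => by
        rw [Finset.prod_attach G fun g => w (code g x)]
        exact hθ x hx
    _ = ∑ p ∈ D.image fun (x : X) (g : ι) (_ : g ∈ G) => code g x,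
          ∏ g ∈ G.attach, w (p g.1 g.2) := by rw [Finset.sum_image hI]
    _ ≤ ∑ p ∈ G.pi fun _ => T, ∏ g ∈ G.attach, w (p g.1 g.2) := by
        refine Finset.sum_le_sum_of_subset_of_nonneg ?_
          fun p _ _ => Finset.prod_nonneg fun _ _ => hw _
        intro p hp
        obtain ⟨x, _, rfl⟩ := Finset.mem_image.1 hp
        exact Finset.mem_pi.2 fun g _ => hT g x
    _ = (∑ a ∈ T, w a) ^ G.card := by
        rw [← Finset.prod_const, Finset.prod_sum]

/-- At most half of the points of `E` cost more than twice the average. The remaining ones are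
counted class by class, a point of a class being determined by its codes along `K * F`. -/
lemma card_sep_le {Γ X α : Type*} [Group Γ] [DecidableEq Γ] [MulAction Γ X] {β : Type*}
    (F K : Finset Γ) (hF : F.Nonempty) (E : Finset X) (P : X → β) (Q : Finset β)
    (hPQ : ∀ x, P x ∈ Q) (T : Finset α) {w : α → ℝ} (hw : ∀ a, 0 ≤ w a) (code : X → α)
    (hT : ∀ x, code x ∈ T) {e B : ℝ} (he : 0 < e) (hwT : ∑ a ∈ T, w a ≤ 1 + 4 * e)
    (cost : X → ℝ) (hcode : ∀ x, Real.exp (-cost x) ≤ w (code x)) (hcost : ∀ x, 0 ≤ cost x)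
    (hB : ∀ x, cost x ≤ B)
    (hsum : ∑ g ∈ F, ∑ x ∈ E, cost (g • x) ≤ e * (F.card * E.card))
    (hK : ((K * F) \ F).card * B ≤ e * F.card) (hK2 : ((K * F).card : ℝ) ≤ 2 * F.card)
    (hinj : ∀ x ∈ E, ∀ x' ∈ E, P x = P x' →
      (∀ g ∈ K * F, code (g • x) = code (g • x')) → x = x') :
    (E.card : ℝ) ≤ 2 * (Q.card * Real.exp (11 * e * F.card)) := by
  classical
  have hFpos : (0 : ℝ) < F.card := by exact_mod_cast hF.card_pos
  set E' := E.filter fun x => ∑ g ∈ F, cost (g • x) ≤ 2 * e * F.card with hE'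
  have hhalf : (E.card : ℝ) ≤ 2 * E'.card := by
    have h1 : ((E.filter fun x => ¬ ∑ g ∈ F, cost (g • x) ≤ 2 * e * F.card).card : ℝ) *
        (2 * e * F.card) ≤ e * (F.card * E.card) := by
      refine le_trans ?_ hsum
      rw [Finset.sum_comm, ← nsmul_eq_mul, ← Finset.sum_const]
      refine le_trans (Finset.sum_le_sum fun x hx => (not_le.1 (Finset.mem_filter.1 hx).2).le) ?_
      exact Finset.sum_le_sum_of_subset_of_nonneg (Finset.filter_subset _ _)
        fun x _ _ => Finset.sum_nonneg fun g _ => hcost _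
    have h2 := Finset.card_filter_add_card_filter_not (s := E)
      (fun x => ∑ g ∈ F, cost (g • x) ≤ 2 * e * F.card)
    rw [← hE'] at h2
    have h3 : (E'.card : ℝ) + ((E.filter fun x => ¬ ∑ g ∈ F, cost (g • x) ≤
        2 * e * F.card).card : ℝ) = E.card := by exact_mod_cast h2
    have h4 : (0 : ℝ) < e * F.card := by positivity
    by_contra! h
    nlinarith
  have hclass : ∀ q ∈ Q, ((E'.filter fun x => P x = q).card : ℝ) ≤ Real.exp (11 * e * F.card) := by
    intro q _
    have h1 := card_mul_le_pow (K * F) (E'.filter fun x => P x = q) T hw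
      (fun g x => code (g • x)) (fun g x => hT _) (θ := Real.exp (-(3 * e * F.card))) ?_ ?_
    · have h2 : (∑ a ∈ T, w a) ^ (K * F).card ≤ Real.exp (8 * e * F.card) := by
        calc (∑ a ∈ T, w a) ^ (K * F).card ≤ (Real.exp (4 * e)) ^ (K * F).card := by
              refine pow_le_pow_left₀ (Finset.sum_nonneg fun a _ => hw a) (hwT.trans ?_) _
              linarith [Real.add_one_le_exp (4 * e)]
          _ = Real.exp ((K * F).card * (4 * e)) := by rw [← Real.exp_nat_mul]
          _ ≤ _ := Real.exp_le_exp.2 (by nlinarith)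
      have h3 := h1.trans h2
      rw [Real.exp_neg, ← div_eq_mul_inv, div_le_iff₀ (Real.exp_pos _), ← Real.exp_add] at h3
      refine h3.trans (le_of_eq ?_)
      ring_nf
    · intro x hx
      have hx' := (Finset.mem_filter.1 (Finset.mem_filter.1 hx).1).2
      have h4 : ∑ g ∈ K * F, cost (g • x) ≤ 3 * e * F.card := by
        rw [← Finset.sum_inter_add_sum_sdiff (K * F) F]
        have h5 : ∑ g ∈ (K * F) ∩ F, cost (g • x) ≤ ∑ g ∈ F, cost (g • x) :=
          Finset.sum_le_sum_of_subset_of_nonneg Finset.inter_subset_right fun g _ _ => hcost _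
        have h6 : ∑ g ∈ (K * F) \ F, cost (g • x) ≤ ((K * F) \ F).card * B := by
          rw [← nsmul_eq_mul]
          exact Finset.sum_le_card_nsmul _ _ _ fun g _ => hB _
        linarith
      calc Real.exp (-(3 * e * F.card)) ≤ Real.exp (∑ g ∈ K * F, -cost (g • x)) := by
            rw [Finset.sum_neg_distrib]
            exact Real.exp_le_exp.2 (by linarith)
        _ = ∏ g ∈ K * F, Real.exp (-cost (g • x)) := Real.exp_sum _ _
        _ ≤ _ := Finset.prod_le_prod (fun _ _ => (Real.exp_pos _).le) fun g _ => hcode _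
    · intro x hx x' hx' h
      rw [Finset.mem_filter, hE', Finset.mem_filter] at hx hx'
      exact hinj x hx.1.1 x' hx'.1.1 (hx.2.trans hx'.2.symm) h
  refine hhalf.trans (mul_le_mul_of_nonneg_left ?_ zero_le_two)
  rw [Finset.card_eq_sum_card_fiberwise (f := P) (s := E') (t := Q) fun x _ => hPQ x]
  push_cast
  rw [← nsmul_eq_mul]
  exact Finset.sum_le_card_nsmul _ _ _ hclass

/-- The functions that are constant on the classes of the relation of having the same image
under `π` and the same values of `ψ` along the orbit form an intermediate algebra. -/
lemma separates_of_prime {Γ X Y : Type*} [Group Γ]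
    [MetricSpace X] [CompactSpace X] [MulAction Γ X] [MetricSpace Y]
    (hcX : ∀ g : Γ, Continuous fun x : X => g • x)
    (π : X → Y) (hπc : Continuous π)
    (hπeq : ∀ (g : Γ) (x x' : X), π x = π x' → π (g • x) = π (g • x'))
    (hprime : ∀ A : Subalgebra ℝ (ContinuousMap X ℝ),
      IsClosed (A : Set (ContinuousMap X ℝ)) →
      (∀ g : Γ, ∀ f ∈ A, f.comp (⟨fun x => g • x, hcX g⟩ : ContinuousMap X X) ∈ A) →
      (∀ k : ContinuousMap Y ℝ, k.comp (⟨π, hπc⟩ : ContinuousMap X Y) ∈ A) →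
      (A : Set (ContinuousMap X ℝ))
          = Set.range (fun k : ContinuousMap Y ℝ => k.comp (⟨π, hπc⟩ : ContinuousMap X Y))
        ∨ A = ⊤)
    (ψ : C(X, ℝ)) {x₀ x₁ : X} (h01 : π x₀ = π x₁) (hψ : ψ x₀ ≠ ψ x₁) (x x' : X)
    (hx : π x = π x') (hxψ : ∀ g : Γ, ψ (g • x) = ψ (g • x')) : x = x' := by
  let A : Subalgebra ℝ (ContinuousMap X ℝ) :=
    { carrier := {f | ∀ x x', π x = π x' → (∀ g : Γ, ψ (g • x) = ψ (g • x')) → f x = f x'}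
      mul_mem' := fun {a b} ha hb x x' h h' => by
        rw [ContinuousMap.mul_apply, ContinuousMap.mul_apply, ha x x' h h', hb x x' h h']
      add_mem' := fun {a b} ha hb x x' h h' => by
        rw [ContinuousMap.add_apply, ContinuousMap.add_apply, ha x x' h h', hb x x' h h']
      algebraMap_mem' := fun r x x' _ _ => rfl }
  have hmem : ∀ f, f ∈ A ↔ ∀ x x', π x = π x' → (∀ g : Γ, ψ (g • x) = ψ (g • x')) → f x = f x' :=
    fun f => Iff.rfl
  have hclosed : IsClosed (A : Set (ContinuousMap X ℝ)) := by
    have : (A : Set (ContinuousMap X ℝ)) = ⋂ (x : X) (x' : X) (_ : π x = π x')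
        (_ : ∀ g : Γ, ψ (g • x) = ψ (g • x')), {f : C(X, ℝ) | f x = f x'} := by
      ext f
      simp only [SetLike.mem_coe, hmem, Set.mem_iInter, Set.mem_ofPred_eq]
    rw [this]
    refine isClosed_iInter fun x => isClosed_iInter fun x' => isClosed_iInter fun _ =>
      isClosed_iInter fun _ => ?_
    exact isClosed_eq (continuous_eval_const (F := C(X, ℝ)) x)
      (continuous_eval_const (F := C(X, ℝ)) x')
  have hinv : ∀ g : Γ, ∀ f ∈ A,
      f.comp (⟨fun x => g • x, hcX g⟩ : ContinuousMap X X) ∈ A := by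
    intro g f hf x x' h h'
    refine hf (g • x) (g • x') (hπeq g x x' h) fun g' => ?_
    simpa only [mul_smul] using h' (g' * g)
  rcases hprime A hclosed hinv fun k x x' h _ => congrArg k h with h | h
  · have hψA : ψ ∈ (A : Set (ContinuousMap X ℝ)) := fun x x' _ h => by simpa using h 1
    rw [h] at hψA
    obtain ⟨k, rfl⟩ := hψA
    exact absurd (congrArg k h01) hψ
  · have hd : (⟨fun z => dist z x, by fun_prop⟩ : C(X, ℝ)) ∈ A := by rw [h]; exact Algebra.mem_top
    have := hd x x' hx hxψ
    simp only [ContinuousMap.coe_mk, dist_self] at this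
    exact (dist_eq_zero.1 this.symm).symm

/-- If infinitely many points lie in nontrivial fibres, a function with cheap codes exists and
generates, together with `π`, the topology of `X`. -/
lemma sep_bound_of_infinite {Γ X Y : Type*} [Group Γ] [Infinite Γ]
    [MetricSpace X] [CompactSpace X] [MulAction Γ X]
    [MetricSpace Y] [CompactSpace Y] [MulAction Γ Y]
    (hcX : ∀ g : Γ, Continuous fun x : X => g • x)
    (hcY : ∀ g : Γ, Continuous fun y : Y => g • y)
    (π : X → Y) (hπc : Continuous π) (hπeq : ∀ (g : Γ) (x : X), π (g • x) = g • π x)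
    (hgen : ∀ (ψ : C(X, ℝ)) (x₀ x₁ : X), π x₀ = π x₁ → ψ x₀ ≠ ψ x₁ →
      ∀ x x', π x = π x' → (∀ g : Γ, ψ (g • x) = ψ (g • x')) → x = x')
    (hM : {x : X | ∃ x', x' ≠ x ∧ π x' = π x}.Infinite)
    (F : ℕ → Finset Γ) (hF : IsFolner F) {r ε c : ℝ} (hε : 0 < ε) (hc : 0 < c)
    (hY : ∀ V : Set (Set Y), IsOpenCover V →
      ∀ᶠ i in atTop, Real.log (coverNum (coverJoin (F i) V)) ≤ r * (F i).card)
    (E : ℕ → Finset X) (hE : ∀ i, IsSep (F i) c (E i)) :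
    ∀ᶠ i in atTop, Real.log ((E i).card) ≤ (r + ε) * (F i).card := by
  classical
  by_contra hcon
  have hfreq : ∃ᶠ i in atTop, (r + ε) * (F i).card < Real.log ((E i).card) := by
    simpa only [Filter.not_eventually, not_le] using hcon
  obtain ⟨ω, hω, hωE⟩ : ∃ ω : Ultrafilter ℕ, (ω : Filter ℕ) ≤ atTop ∧
      ∀ᶠ i in (ω : Filter ℕ), (r + ε) * (F i).card < Real.log ((E i).card) := by
    have := Filter.frequently_iff_neBot.1 hfreq
    refine ⟨Ultrafilter.of (atTop ⊓ principal
      {i | (r + ε) * (F i).card < Real.log ((E i).card)}), (Ultrafilter.of_le _).trans inf_le_left, ?_⟩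
    exact (Ultrafilter.of_le _).trans inf_le_right (Filter.mem_principal_self _)
  obtain ⟨e, he, he1, heε⟩ : ∃ e : ℝ, 0 < e ∧ e < 1 ∧ 12 * e ≤ ε := by
    refine ⟨min (1 / 2) (ε / 12), by positivity, (min_le_left _ _).trans_lt (by norm_num), ?_⟩
    linarith [min_le_right (1 / 2) (ε / 12)]
  obtain ⟨ψ, x₀, x₁, h01, hψ, hcheap⟩ := exists_cheap_code π hM ω F E he he1
  obtain ⟨K, δ, hδ, hK⟩ := exists_uniform hcX π hπc ψ (Z := {p : X × X | c ≤ dist p.1 p.2})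
    (isClosed_le continuous_const continuous_dist) (fun p hp h h' => by
      have := hgen ψ x₀ x₁ h01 hψ p.1 p.2 h h'
      have hp' : c ≤ dist p.1 p.2 := hp
      rw [this, dist_self] at hp'
      linarith)
  obtain ⟨V, hV, hcl⟩ := exists_classes hcY π hπeq hδ
  obtain ⟨T, w, code, cost, B, hT, hw, hwT, hcode, hcost, hB, hψδ, hsum⟩ := hcheap δ hδ
  obtain ⟨N, hN⟩ := exists_nat_gt (Real.log 2 / e)
  have hall := (((hY V hV).and (hF.eventually_mul_sdiff K
    (show 0 < e / (|B| + 1) by positivity))).and ((hF.eventually_card_mul_le K).and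
    (hF.eventually_le_card N))).filter_mono hω
  obtain ⟨i, ⟨⟨hi1, hi2⟩, hi3, hi4⟩, hi5, hi6⟩ := (hall.and (hsum.and hωE)).exists
  obtain ⟨P, Q, hPQ, hQ, hPd⟩ := hcl (F i)
  have hFpos : (0 : ℝ) < (F i).card := by exact_mod_cast (hF.1 i).card_pos
  have hcard := card_sep_le (F i) K (hF.1 i) (E i) P Q hPQ T hw code hT he hwT cost hcode hcost hB
    hi5 (by
      calc (((K * F i) \ F i).card : ℝ) * B ≤ ((K * F i) \ F i).card * (|B| + 1) := by
            gcongr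
            linarith [le_abs_self B]
        _ ≤ (e / (|B| + 1) * (F i).card) * (|B| + 1) := by gcongr
        _ = e * (F i).card := by field_simp) hi3 (by
      intro x hx x' hx' hP hco
      refine hE i x hx x' hx' fun f hf => ?_
      by_contra! hd
      refine hK (f • x, f • x') hd (hPd x x' hP f hf) fun k hk => ?_
      rw [← mul_smul, ← mul_smul]
      exact hψδ _ _ (hco _ (Finset.mul_mem_mul hk hf)))
  have hNe : Real.log 2 ≤ e * (F i).card := by
    have h1 : Real.log 2 / e ≤ (F i).card := hN.le.trans (by exact_mod_cast hi4)
    rw [div_le_iff₀ he] at h1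
    linarith
  rcases Nat.eq_zero_or_pos (E i).card with h0 | hpos
  · -- an empty separated set: `Real.log 0 = 0`, and the bound on `Y` forces `0 ≤ r`
    have h1 : (0 : ℝ) ≤ Real.log (coverNum (coverJoin (F i) V)) := Real.log_natCast_nonneg _
    rw [h0, Nat.cast_zero, Real.log_zero] at hi6
    nlinarith
  · have hEpos : (0 : ℝ) < (E i).card := by exact_mod_cast hpos
    have hQpos : (0 : ℝ) < Q.card := by
      obtain ⟨x, _⟩ := Finset.card_pos.1 hpos
      exact_mod_cast Finset.card_pos.2 ⟨_, hPQ x⟩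
    have h1 := Real.log_le_log hEpos hcard
    rw [Real.log_mul two_ne_zero (by positivity), Real.log_mul hQpos.ne' (Real.exp_pos _).ne',
      Real.log_exp, hQ] at h1
    nlinarith

end Pointwise

/-! ### Comparison of the entropies -/

/-- A factor has smaller entropy: a subcover of the pulled back cover pushes forward. -/
lemma coverNum_coverJoin_le {Γ X Y : Type*} [Group Γ] [TopologicalSpace X] [CompactSpace X]
    [MulAction Γ X] [TopologicalSpace Y] [MulAction Γ Y]
    (hcX : ∀ g : Γ, Continuous fun x : X => g • x) (π : X → Y) (hπsurj : Function.Surjective π)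
    (hπeq : ∀ (g : Γ) (x : X), π (g • x) = g • π x) (F : Finset Γ) {V : Set (Set Y)}
    (hV : IsOpenCover ((fun v => π ⁻¹' v) '' V)) :
    coverNum (coverJoin F V) ≤ coverNum (coverJoin F ((fun v => π ⁻¹' v) '' V)) := by
  classical
  obtain ⟨W, hW, hWu, hWc⟩ := exists_coverNum (coverJoin_isOpenCover hcX F hV)
  rw [← hWc]
  -- members of the pulled back join are preimages of members of the join
  have hpre : ∀ u ∈ W, ∃ v ∈ coverJoin F V, u = π ⁻¹' v := by
    intro u hu
    obtain ⟨s, hs, rfl⟩ := hW hu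
    choose! t ht hts using hs
    refine ⟨_, ⟨t, ht, rfl⟩, ?_⟩
    ext x
    simp only [Set.mem_iInter, Set.mem_preimage]
    refine forall₂_congr fun g hg => ?_
    rw [← hts g hg, Set.mem_preimage, hπeq]
  choose! v hv hvu using hpre
  refine (coverNum_le (W.image v) ?_ ?_).trans Finset.card_image_le
  · intro y hy
    obtain ⟨u, hu, rfl⟩ := Finset.mem_image.1 hy
    exact hv u hu
  · refine Set.eq_univ_of_forall fun y => ?_
    obtain ⟨x, rfl⟩ := hπsurj y
    obtain ⟨u, hu, hxu⟩ : x ∈ ⋃₀ (W : Set (Set X)) := hWu ▸ Set.mem_univ x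
    refine ⟨v u, Finset.mem_coe.2 (Finset.mem_image_of_mem v hu), ?_⟩
    rw [hvu u hu] at hxu
    exact hxu

/-- **Topologically prime extensions preserve entropy (Weiss).**
Let `Γ` be a countably infinite amenable group acting by homeomorphisms on compact metric
spaces `X` and `Y`, and let `π : X → Y` be a topologically prime extension: a continuous
`Γ`-equivariant surjection such that every `Γ`-invariant closed subalgebra of `C(X)`
containing `π*(C(Y))` equals `π*(C(Y))` or `C(X)`.  Then `h_Γ(X) = h_Γ(Y)` (along any
Følner sequence). -/
theorem prime_extension_entropy_eq
    {Γ X Y : Type*} [Group Γ] [Countable Γ] [Infinite Γ]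
    [MetricSpace X] [CompactSpace X] [MulAction Γ X]
    [MetricSpace Y] [CompactSpace Y] [MulAction Γ Y]
    (hcX : ∀ g : Γ, Continuous fun x : X => g • x)
    (hcY : ∀ g : Γ, Continuous fun y : Y => g • y)
    (hamen : ∃ F : ℕ → Finset Γ, IsFolner F)
    (π : X → Y) (hπc : Continuous π) (hπsurj : Function.Surjective π)
    (hπeq : ∀ (g : Γ) (x : X), π (g • x) = g • π x)
    (hprime : ∀ A : Subalgebra ℝ (ContinuousMap X ℝ),
      IsClosed (A : Set (ContinuousMap X ℝ)) →
      (∀ g : Γ, ∀ f ∈ A, f.comp (⟨fun x => g • x, hcX g⟩ : ContinuousMap X X) ∈ A) →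
      (∀ k : ContinuousMap Y ℝ, k.comp (⟨π, hπc⟩ : ContinuousMap X Y) ∈ A) →
      (A : Set (ContinuousMap X ℝ))
          = Set.range (fun k : ContinuousMap Y ℝ => k.comp (⟨π, hπc⟩ : ContinuousMap X Y))
        ∨ A = ⊤) :
    ∀ F : ℕ → Finset Γ, IsFolner F → topEnt Γ X F = topEnt Γ Y F := by
  intro F hF
  refine le_antisymm ?_ ?_
  · refine iSup₂_le fun U hU => ?_
    by_contra! hlt
    obtain ⟨r, hr, hlt⟩ := ENNReal.lt_iff_exists_nnreal_btwn.1 hlt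
    obtain ⟨s, hs, hlt⟩ := ENNReal.lt_iff_exists_nnreal_btwn.1 hlt
    have hrs : (r : ℝ) < s := by exact_mod_cast hs
    have hY : ∀ V : Set (Set Y), IsOpenCover V →
        ∀ᶠ i in atTop, Real.log (coverNum (coverJoin (F i) V)) ≤ r * (F i).card := by
      intro V hV
      have h1 := lt_of_le_of_lt (le_iSup₂ (f := fun (V : Set (Set Y)) (_ : IsOpenCover V) =>
        Filter.limsup (fun i => ENNReal.ofReal
          (Real.log (coverNum (coverJoin (F i) V)) / (F i).card)) atTop) V hV) hr
      filter_upwards [Filter.eventually_lt_of_limsup_lt h1] with i hi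
      have hFpos : (0 : ℝ) < (F i).card := by exact_mod_cast (hF.1 i).card_pos
      rw [← ENNReal.ofReal_coe_nnreal, ENNReal.ofReal_lt_ofReal_iff'] at hi
      exact ((div_lt_iff₀ hFpos).1 hi.1).le
    obtain ⟨c, hc, hcov⟩ := exists_lebesgue (Γ := Γ) hU
    choose E hE hspan using fun i => exists_sep hcX (F i) hc
    have hbound : ∀ᶠ i in atTop, Real.log ((E i).card) ≤ (r + (s - r)) * (F i).card := by
      by_cases hM : {x : X | ∃ x', x' ≠ x ∧ π x' = π x}.Finite
      · exact sep_bound_of_finite hcX hcY π hπc hπeq hM F hF (sub_pos.2 hrs) hc hY E hE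
      · exact sep_bound_of_infinite hcX hcY π hπc hπeq
          (fun ψ x₀ x₁ h01 hψ => separates_of_prime hcX π hπc
            (fun g x x' h => by rw [hπeq, hπeq, h]) hprime ψ h01 hψ)
          hM F hF (sub_pos.2 hrs) hc hY E hE
    refine absurd hlt (not_lt.2 (Filter.limsup_le_of_le (h := ?_)))
    filter_upwards [hbound] with i hi
    have hFpos : (0 : ℝ) < (F i).card := by exact_mod_cast (hF.1 i).card_pos
    rw [← ENNReal.ofReal_coe_nnreal]
    refine ENNReal.ofReal_le_ofReal ((div_le_iff₀ hFpos).2 ?_)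
    have h1 := hcov (F i) (E i) (hspan i)
    rcases Nat.eq_zero_or_pos (coverNum (coverJoin (F i) U)) with h0 | hpos
    · rw [h0, Nat.cast_zero, Real.log_zero]
      positivity
    · have h2 : Real.log (coverNum (coverJoin (F i) U)) ≤ Real.log (E i).card :=
        Real.log_le_log (by exact_mod_cast hpos) (by exact_mod_cast h1)
      linarith
  · refine iSup₂_le fun V hV => ?_
    have hV' : IsOpenCover ((fun v => π ⁻¹' v) '' V) := by
      constructor
      · rintro _ ⟨v, hv, rfl⟩
        exact (hV.1 v hv).preimage hπc
      · refine Set.eq_univ_of_forall fun x => ?_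
        obtain ⟨v, hv, hxv⟩ : π x ∈ ⋃₀ V := hV.2 ▸ Set.mem_univ (π x)
        exact ⟨_, ⟨v, hv, rfl⟩, hxv⟩
    refine le_trans ?_ (le_iSup₂ (f := fun (U : Set (Set X)) (_ : IsOpenCover U) =>
        Filter.limsup (fun i => ENNReal.ofReal
          (Real.log (coverNum (coverJoin (F i) U)) / (F i).card)) atTop) _ hV')
    refine Filter.limsup_le_limsup (Filter.Eventually.of_forall fun i => ?_)
    refine ENNReal.ofReal_le_ofReal (div_le_div_of_nonneg_right ?_ (Nat.cast_nonneg _))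
    have h1 := coverNum_coverJoin_le hcX π hπsurj hπeq (F i) hV'
    rcases Nat.eq_zero_or_pos (coverNum (coverJoin (F i) V)) with h0 | hpos
    · rw [h0, Nat.cast_zero, Real.log_zero]
      exact Real.log_natCast_nonneg _
    · exact Real.log_le_log (by exact_mod_cast hpos) (by exact_mod_cast h1)
end
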